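/- arXiv:1310.2573 — 2 statements merged into one kernel-verified Lean document; each statement's English description precedes it below -/
import Mathlib

section
/- Let K be a ℂ-hull with {0} ⊊ K, and g_K the associated normalized conformal map from the complement of K onto the exterior of the unit disc. Then |e^{cap(K)} g_K(z) − z| ≤ 5 e^{cap(K)} for every z ∈ ℂ \ K. -/
open Filter Set Topology

/-- `K` is a `ℂ`-hull: a connected compact subset of `ℂ` with connected complement. -/
def IsCHull (K : Set ℂ) : Prop :=
  IsCompact K ∧ IsConnected K ∧ IsConnected Kᶜ

/-- `g` is the normalized Riemann map `g_K` from the complement of the hull `K` onto the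
exterior of the closed unit disc, fixing `∞`, with `g_K'(∞) = lim_{z→∞} z / g(z) = exp cap`,
where `cap = cap(K)` is the whole-plane capacity of `K`. -/
def IsWholePlaneCapacityMap (K : Set ℂ) (g : ℂ → ℂ) (cap : ℝ) : Prop :=
  DifferentiableOn ℂ g Kᶜ ∧ InjOn g Kᶜ ∧ g '' Kᶜ = {z : ℂ | 1 < ‖z‖} ∧
    Tendsto (fun z : ℂ => z / g z) (Bornology.cobounded ℂ) (𝓝 (Real.exp cap))


lemma inv_differentiableAt {U : Set ℂ} (hU : IsOpen U) {p F : ℂ → ℂ} (hp : DifferentiableOn ℂ p U)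
    (hinj : InjOn p U) (hF : ∀ z ∈ U, F (p z) = z) {z : ℂ} (hz : z ∈ U) :
    DifferentiableAt ℂ F (p z) := by
  have han : ∀ x ∈ U, AnalyticAt ℂ p x := fun x hx => hp.analyticAt (hU.mem_nhds hx)
  have hnc : ∀ x ∈ U, ¬ ∀ᶠ y in 𝓝 x, p y = p x := by
    intro x hx h
    have h2 : ∀ᶠ y in 𝓝 x, y = x := by
      filter_upwards [h, hU.mem_nhds hx] with y hy hyU using hinj hyU hx hy
    have h3 : ({x} : Set ℂ) ∈ 𝓝 x := h2
    have h4 : IsOpen ({x} : Set ℂ) := by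
      rw [isOpen_iff_mem_nhds]; intro y hy; rw [mem_singleton_iff] at hy; rw [hy]; exact h3
    exact not_isOpen_singleton x h4
  have hle : ∀ x ∈ U, 𝓝 (p x) ≤ map p (𝓝 x) := fun x hx =>
    ((han x hx).eventually_constant_or_nhds_le_map_nhds).resolve_left (hnc x hx)
  have hevent : ∀ x ∈ U, ∀ V ∈ 𝓝 x, ∀ᶠ w in 𝓝 (p x), w ∈ p '' (V ∩ U) := by
    intro x hx V hV
    exact hle x hx (image_mem_map (inter_mem hV (hU.mem_nhds hx)))
  have hcont : ∀ x ∈ U, ContinuousAt F (p x) := by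
    intro x hx
    rw [ContinuousAt, hF x hx]
    intro V hV; rw [Filter.mem_map]
    filter_upwards [hevent x hx V hV]
    rintro w ⟨y, ⟨hyV, hyU⟩, rfl⟩
    simpa [hF y hyU] using hyV
  have hright : ∀ x ∈ U, ∀ᶠ w in 𝓝 (p x), p (F w) = w := by
    intro x hx
    filter_upwards [hevent x hx univ univ_mem]
    rintro w ⟨y, ⟨-, hyU⟩, rfl⟩
    rw [hF y hyU]
  have hdiff : ∀ x ∈ U, deriv p x ≠ 0 → DifferentiableAt ℂ F (p x) := by
    intro x hx hd
    have h1 : HasDerivAt p (deriv p x) (F (p x)) := by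
      rw [hF x hx]; exact (han x hx).differentiableAt.hasDerivAt
    exact (HasDerivAt.of_local_left_inverse (hcont x hx) h1 hd (hright x hx)).differentiableAt
  refine (Complex.analyticAt_of_differentiable_on_punctured_nhds_of_continuousAt ?_
    (hcont z hz)).differentiableAt
  rcases (han z hz).deriv.eventually_eq_zero_or_eventually_ne_zero with h | h
  · exfalso
    obtain ⟨r, hr, hb⟩ := Metric.eventually_nhds_iff_ball.1 (h.and (hU.mem_nhds hz))
    apply hnc z hz
    filter_upwards [Metric.ball_mem_nhds z hr] with y hy
    exact (convex_ball z r).is_const_of_fderivWithin_eq_zero (𝕜 := ℂ)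
      (fun w hw => (han w (hb w hw).2).differentiableAt.differentiableWithinAt)
      (fun w hw => by
        rw [fderivWithin_of_isOpen Metric.isOpen_ball hw]
        ext; simpa using (hb w hw).1) hy (Metric.mem_ball_self hr)
  · rw [eventually_nhdsWithin_iff] at h ⊢
    filter_upwards [hevent z hz _ h]
    rintro w ⟨y, ⟨hy, hyU⟩, rfl⟩ hne
    refine hdiff y hyU (hy ?_)
    rintro rfl
    exact hne rfl


lemma polar_annulus {Φ : ℂ → ℝ} {a b : ℝ} (ha : 0 ≤ a) (hab : a ≤ b)
    (hc : ContinuousOn Φ {z : ℂ | a ≤ ‖z‖ ∧ ‖z‖ ≤ b}) :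
    ∫ z in {z : ℂ | a < ‖z‖ ∧ ‖z‖ < b}, Φ z
      = ∫ t in a..b, 2 * Real.pi * t * Real.circleAverage Φ 0 t := by
  have hcm : ∀ t θ : ℝ, Complex.polarCoord.symm (t, θ) = circleMap 0 t θ := by
    intro t θ
    rw [Complex.polarCoord_symm_apply, circleMap, zero_add, Complex.exp_mul_I]
    simp
  have hA : MeasurableSet {z : ℂ | a < ‖z‖ ∧ ‖z‖ < b} :=
    ((isOpen_lt continuous_const continuous_norm).inter
      (isOpen_lt continuous_norm continuous_const)).measurableSet
  rw [← MeasureTheory.integral_indicator hA, ← Complex.integral_comp_polarCoord_symm]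
  have hset : Ioo a b ×ˢ Ioo (-Real.pi) Real.pi ⊆ polarCoord.target := by
    rintro ⟨t, θ⟩ ⟨ht, hθ⟩
    exact ⟨lt_of_le_of_lt ha ht.1, hθ⟩
  have h1 : ∫ p in polarCoord.target, p.1 •
      ({z : ℂ | a < ‖z‖ ∧ ‖z‖ < b}.indicator Φ (Complex.polarCoord.symm p))
      = ∫ p in Ioo a b ×ˢ Ioo (-Real.pi) Real.pi, p.1 * Φ (circleMap 0 p.1 p.2) := by
    rw [← MeasureTheory.integral_indicator polarCoord.open_target.measurableSet,
      ← MeasureTheory.integral_indicator (measurableSet_Ioo.prod measurableSet_Ioo)]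
    congr 1
    ext ⟨t, θ⟩
    by_cases hp : (t, θ) ∈ polarCoord.target
    · have ht : 0 < t := hp.1
      by_cases hq : (t, θ) ∈ Ioo a b ×ˢ Ioo (-Real.pi) Real.pi
      · rw [indicator_of_mem hp, indicator_of_mem hq, hcm, indicator_of_mem]
        · simp
        · simpa [abs_of_pos ht] using hq.1
      · rw [indicator_of_mem hp, indicator_of_notMem hq, hcm, indicator_of_notMem]
        · simp
        · intro h
          apply hq
          refine ⟨?_, hp.2⟩
          simpa [abs_of_pos ht] using h
    · rw [indicator_of_notMem hp, indicator_of_notMem (fun h => hp (hset h))]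
  rw [h1]
  have hIntg : MeasureTheory.IntegrableOn (fun p : ℝ × ℝ => p.1 * Φ (circleMap 0 p.1 p.2))
      (Ioo a b ×ˢ Ioo (-Real.pi) Real.pi) := by
    have hco : ContinuousOn (fun p : ℝ × ℝ => p.1 * Φ (circleMap 0 p.1 p.2))
        (Icc a b ×ˢ Icc (-Real.pi) Real.pi) := by
      refine continuousOn_fst.mul (hc.comp ?_ ?_)
      · apply Continuous.continuousOn
        unfold circleMap
        fun_prop
      · rintro ⟨t, θ⟩ ⟨ht, -⟩
        have : 0 ≤ t := ha.trans ht.1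
        simpa [abs_of_nonneg this] using ht
    exact (hco.integrableOn_compact (isCompact_Icc.prod isCompact_Icc)).mono_set
      (prod_mono Ioo_subset_Icc_self Ioo_subset_Icc_self)
  rw [MeasureTheory.Measure.volume_eq_prod] at hIntg ⊢
  rw [MeasureTheory.setIntegral_prod _ hIntg, intervalIntegral.integral_of_le hab,
    ← MeasureTheory.integral_Ioc_eq_integral_Ioo]
  refine MeasureTheory.setIntegral_congr_fun measurableSet_Ioc fun t ht => ?_
  simp only
  rw [MeasureTheory.integral_const_mul, Real.circleAverage_eq_integral_add (-Real.pi),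
    intervalIntegral.integral_comp_add_right (fun θ ↦ Φ (circleMap 0 t θ)),
    ← MeasureTheory.integral_Ioc_eq_integral_Ioo, ← intervalIntegral.integral_of_le]
  · have h2 : 2 * Real.pi + -Real.pi = Real.pi := by ring
    rw [zero_add, h2, smul_eq_mul]
    field_simp
  · linarith [Real.pi_pos]

lemma det_cmul (c : ℂ) :
    |((ContinuousLinearMap.toSpanSingleton ℂ c).restrictScalars ℝ : ℂ →L[ℝ] ℂ).det| = ‖c‖ ^ 2 := by
  simp [ContinuousLinearMap.det, LinearMap.det_restrictScalars, Algebra.norm_complex_apply,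
    Complex.normSq_eq_norm_sq]

lemma circle_algebra {t δ s M x y H2 K2 r b : ℝ} (ht0 : 0 < t) (ht1 : t < 1) (hs0 : 0 ≤ s)
    (hs : s = (δ ^ 2)⁻¹ - (t ^ 2)⁻¹) (hM0 : 0 ≤ M) (ha : |x| ≤ M * t ^ 2) (hb : |y| ≤ M * t ^ 2)
    (hH20 : 0 ≤ H2) (hh2 : H2 ≤ M ^ 2 * t ^ 2) (hK20 : 0 ≤ K2) (hk3 : K2 ≤ M ^ 2)
    (hk2 : 2 * r - b ≤ K2) :
    s * (-2 * y / t ^ 4 + 2 * r) - 2 * x / t ^ 6 + (s * ((t ^ 4)⁻¹ - b) -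
        (M ^ 2 + (2 * M + M ^ 2) ^ 2) * (t ^ 2)⁻¹) ≤
      ((δ ^ 2)⁻¹ - ((t ^ 2)⁻¹ + (2 * x / t ^ 2 + H2))) *
        ((t ^ 4)⁻¹ + (-2 * y / t ^ 4 + K2)) := by
  have ht2 : t ^ 2 ≤ 1 := by nlinarith
  have hD : |2 * x / t ^ 2 + H2| ≤ 2 * M + M ^ 2 := by
    refine (abs_add_le _ _).trans ?_
    rw [abs_div, abs_mul, abs_of_pos (by positivity : 0 < t ^ 2), abs_of_nonneg hH20, abs_two]
    refine add_le_add ?_ ?_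
    · rw [div_le_iff₀ (by positivity)]; linarith
    · nlinarith [sq_nonneg M]
  have hX : |-2 * y / t ^ 4 + K2| ≤ (2 * M + M ^ 2) * (t ^ 2)⁻¹ := by
    refine (abs_add_le _ _).trans ?_
    rw [abs_div, abs_mul, abs_of_pos (by positivity : 0 < t ^ 4), abs_of_nonneg hK20, abs_neg,
      abs_two, add_mul]
    refine add_le_add ?_ ?_
    · rw [div_le_iff₀ (by positivity)]
      have : 2 * M * (t ^ 2)⁻¹ * t ^ 4 = 2 * (M * t ^ 2) := by field_simp
      rw [this]; linarith
    · have : 1 ≤ (t ^ 2)⁻¹ := (one_le_inv₀ (by positivity)).2 ht2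
      nlinarith [sq_nonneg M]
  set D := 2 * x / t ^ 2 + H2 with hDdef
  set X := -2 * y / t ^ 4 + K2 with hXdef
  have hDX : D * X ≤ (2 * M + M ^ 2) ^ 2 * (t ^ 2)⁻¹ := by
    calc D * X ≤ |D * X| := le_abs_self _
      _ = |D| * |X| := abs_mul _ _
      _ ≤ (2 * M + M ^ 2) * ((2 * M + M ^ 2) * (t ^ 2)⁻¹) := by gcongr
      _ = _ := by ring
  have hH2t : H2 * (t ^ 4)⁻¹ ≤ M ^ 2 * (t ^ 2)⁻¹ := by
    calc H2 * (t ^ 4)⁻¹ ≤ (M ^ 2 * t ^ 2) * (t ^ 4)⁻¹ := by gcongr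
      _ = _ := by field_simp
  have e1 : ((δ ^ 2)⁻¹ - ((t ^ 2)⁻¹ + D)) * ((t ^ 4)⁻¹ + X) =
      s * (t ^ 4)⁻¹ + s * X - 2 * x / t ^ 6 - H2 * (t ^ 4)⁻¹ - D * X := by
    rw [hs]
    have : D * (t ^ 4)⁻¹ = 2 * x / t ^ 6 + H2 * (t ^ 4)⁻¹ := by
      rw [hDdef]; field_simp
    linear_combination -this
  rw [e1, hXdef]
  have := mul_le_mul_of_nonneg_left hk2 hs0
  nlinarith

/-- the circle estimate -/
lemma circle_estimate {h : ℂ → ℂ} (hd : DifferentiableOn ℂ h (Metric.ball 0 1))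
    {τ M : ℝ} (hτ1 : τ < 1) (hM0 : 0 ≤ M)
    (hM : ∀ u : ℂ, ‖u‖ ≤ τ → ‖h u‖ ≤ M * ‖u‖) (hM' : ∀ u : ℂ, ‖u‖ ≤ τ → ‖deriv h u‖ ≤ M)
    {δ t : ℝ} (hδ : 0 < δ) (hδt : δ ≤ t) (htτ : t ≤ τ) :
    ((δ ^ 2)⁻¹ - (t ^ 2)⁻¹) * ((t ^ 4)⁻¹ + ‖deriv h 0‖ ^ 2) -
        (M ^ 2 + (2 * M + M ^ 2) ^ 2) * (t ^ 2)⁻¹ ≤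
      Real.circleAverage (fun u => ((δ ^ 2)⁻¹ - ‖u⁻¹ + h u‖ ^ 2) * ‖-(u ^ 2)⁻¹ + deriv h u‖ ^ 2)
        0 t := by
  have ht0 : 0 < t := hδ.trans_le hδt
  have ht1 : t < 1 := htτ.trans_lt hτ1
  set β := deriv h 0 with hβ
  set s := (δ ^ 2)⁻¹ - (t ^ 2)⁻¹ with hs
  have hs0 : 0 ≤ s := by
    rw [hs, sub_nonneg]; gcongr
  have hkd : DifferentiableOn ℂ (deriv h) (Metric.ball 0 1) := hd.deriv Metric.isOpen_ball
  let Ψ : ℂ → ℂ := fun u => s * (-2 * deriv h u * u ^ 2 / t ^ 4 + 2 * deriv h u * star β)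
    - 2 * h u * u / t ^ 6
  have hΨd : DifferentiableOn ℂ Ψ (Metric.ball 0 1) := by
    simp only [Ψ]; fun_prop
  have hsub : Metric.closedBall (0 : ℂ) t ⊆ Metric.ball 0 1 := Metric.closedBall_subset_ball ht1
  have hssub : Metric.sphere (0 : ℂ) |t| ⊆ Metric.ball 0 1 := by
    rw [abs_of_pos ht0]; exact Metric.sphere_subset_closedBall.trans hsub
  have hΨc : CircleIntegrable Ψ 0 t := by
    refine ContinuousOn.circleIntegrable' ?_
    exact hΨd.continuousOn.mono hssub
  have havg : Real.circleAverage Ψ 0 t = Ψ 0 := by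
    apply DiffContOnCl.circleAverage
    rw [abs_of_pos ht0]
    exact hΨd.diffContOnCl_ball hsub
  have hre : Real.circleAverage (fun u => (Ψ u).re) 0 t = (Ψ 0).re := by
    rw [← havg]
    exact Complex.reCLM.circleAverage_comp_comm hΨc
  have hΨ0 : (Ψ 0).re = 2 * s * ‖β‖ ^ 2 := by
    have : Ψ 0 = ((2 * s * ‖β‖ ^ 2 : ℝ) : ℂ) := by
      have := Complex.mul_conj' β
      simp only [Ψ, ← hβ]
      push_cast
      rw [← this]
      simp
      ring
    rw [this, Complex.ofReal_re]
  have hconst : s * ((t ^ 4)⁻¹ + ‖β‖ ^ 2) - (M ^ 2 + (2 * M + M ^ 2) ^ 2) * (t ^ 2)⁻¹ =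
      Real.circleAverage (fun u => (Ψ u).re + (s * ((t ^ 4)⁻¹ - ‖β‖ ^ 2) -
        (M ^ 2 + (2 * M + M ^ 2) ^ 2) * (t ^ 2)⁻¹)) 0 t := by
    rw [Real.circleAverage_fun_add, hre, Real.circleAverage_const, hΨ0]
    · ring
    · refine ContinuousOn.circleIntegrable' ?_
      exact Complex.continuous_re.comp_continuousOn (hΨd.continuousOn.mono hssub)
    · exact circleIntegrable_const _ _ _
  rw [hconst]
  have hne : ∀ u ∈ Metric.sphere (0 : ℂ) |t|, u ≠ 0 := by
    intro u hu h
    rw [abs_of_pos ht0, mem_sphere_zero_iff_norm] at hu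
    rw [h, norm_zero] at hu
    exact ht0.ne hu
  apply Real.circleAverage_mono
  · refine ContinuousOn.circleIntegrable' ?_
    exact (Complex.continuous_re.comp_continuousOn (hΨd.continuousOn.mono hssub)).add
      continuousOn_const
  · refine ContinuousOn.circleIntegrable' ?_
    have h1 := hd.continuousOn.mono hssub
    have h2 := hkd.continuousOn.mono hssub
    have h3 : ContinuousOn (fun u : ℂ => u⁻¹) (Metric.sphere (0 : ℂ) |t|) :=
      continuousOn_inv₀.mono fun u hu => hne u hu
    have h4 : ContinuousOn (fun u : ℂ => (u ^ 2)⁻¹) (Metric.sphere (0 : ℂ) |t|) := by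
      simp_rw [← inv_pow]; exact h3.pow 2
    exact (continuousOn_const.sub ((h3.add h1).norm.pow 2)).mul ((h4.neg.add h2).norm.pow 2)
  intro u hu
  have hu0 := hne u hu
  rw [abs_of_pos ht0, mem_sphere_zero_iff_norm] at hu
  -- expansion
  have hinv : ∀ v : ℂ, v ≠ 0 → v⁻¹ = star v * ((‖v‖ ^ 2 : ℝ) : ℂ)⁻¹ := by
    intro v _
    rw [Complex.inv_def, Complex.normSq_eq_norm_sq, Complex.ofReal_inv]; rfl
  have hH : ‖u⁻¹ + h u‖ ^ 2 = (t ^ 2)⁻¹ + (2 * (h u * u).re / t ^ 2 + ‖h u‖ ^ 2) := by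
    rw [← Complex.normSq_eq_norm_sq, Complex.normSq_add, Complex.normSq_inv,
      Complex.normSq_eq_norm_sq, Complex.normSq_eq_norm_sq, hu, hinv u hu0, hu]
    have : (star u * ((t ^ 2 : ℝ) : ℂ)⁻¹ * (starRingEnd ℂ) (h u)).re = (h u * u).re / t ^ 2 := by
      rw [← Complex.ofReal_inv, mul_right_comm, Complex.re_mul_ofReal]
      simp
      ring
    rw [this]; ring
  have hH' : ‖-(u ^ 2)⁻¹ + deriv h u‖ ^ 2 =
      (t ^ 4)⁻¹ + (- 2 * (deriv h u * u ^ 2).re / t ^ 4 + ‖deriv h u‖ ^ 2) := by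
    rw [← Complex.normSq_eq_norm_sq, Complex.normSq_add, Complex.normSq_neg, Complex.normSq_inv,
      Complex.normSq_eq_norm_sq, Complex.normSq_eq_norm_sq, hinv (u ^ 2) (pow_ne_zero _ hu0),
      norm_pow, hu]
    have : (-(star (u ^ 2) * (((t ^ 2) ^ 2 : ℝ) : ℂ)⁻¹) * (starRingEnd ℂ) (deriv h u)).re
        = - (deriv h u * u ^ 2).re / t ^ 4 := by
      rw [← Complex.ofReal_inv, neg_mul, mul_right_comm, Complex.neg_re, Complex.re_mul_ofReal]
      simp [-map_pow, -star_pow]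
      ring
    rw [this]; ring
  have hk2 : 2 * (deriv h u * star β).re - ‖β‖ ^ 2 ≤ ‖deriv h u‖ ^ 2 := by
    have h1 := Complex.normSq_nonneg (deriv h u - β)
    rw [Complex.normSq_sub, Complex.normSq_eq_norm_sq, Complex.normSq_eq_norm_sq] at h1
    have : (deriv h u * star β).re = (deriv h u * (starRingEnd ℂ) β).re := rfl
    linarith
  have hΨu : (Ψ u).re = s * (-2 * (deriv h u * u ^ 2).re / t ^ 4 + 2 * (deriv h u * star β).re)
      - 2 * (h u * u).re / t ^ 6 := by
    have : Ψ u = (s : ℂ) * (((-2 / t ^ 4 : ℝ) : ℂ) * (deriv h u * u ^ 2) +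
        ((2 : ℝ) : ℂ) * (deriv h u * star β)) - ((2 / t ^ 6 : ℝ) : ℂ) * (h u * u) := by
      simp only [Ψ]; push_cast; ring
    rw [this, Complex.sub_re, Complex.re_ofReal_mul, Complex.add_re, Complex.re_ofReal_mul,
      Complex.re_ofReal_mul, Complex.re_ofReal_mul]
    ring
  have hhu := hM u (hu.le.trans htτ)
  have hku := hM' u (hu.le.trans htτ)
  rw [hu] at hhu
  have ha : |(h u * u).re| ≤ M * t ^ 2 := by
    refine (Complex.abs_re_le_norm _).trans ?_
    rw [norm_mul, hu]; nlinarith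
  have hb : |(deriv h u * u ^ 2).re| ≤ M * t ^ 2 := by
    refine (Complex.abs_re_le_norm _).trans ?_
    rw [norm_mul, norm_pow, hu]; nlinarith [sq_nonneg t]
  have hh2 : ‖h u‖ ^ 2 ≤ M ^ 2 * t ^ 2 := by
    rw [← mul_pow]; gcongr
  have hk3 : ‖deriv h u‖ ^ 2 ≤ M ^ 2 := by gcongr
  rw [hΨu]
  rw [hH, hH']
  exact circle_algebra ht0 ht1 hs0 hs hM0 ha hb (by positivity) hh2 (by positivity) hk3 hk2


lemma disc_integral {ρ : ℝ} (hρ : 0 ≤ ρ) :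
    ∫ z in {z : ℂ | 0 < ‖z‖ ∧ ‖z‖ < ρ}, (ρ ^ 2 - ‖z‖ ^ 2) = Real.pi * ρ ^ 4 / 2 := by
  rw [polar_annulus le_rfl hρ (by fun_prop)]
  have h1 : ∀ t ∈ uIcc 0 ρ, 2 * Real.pi * t * Real.circleAverage (fun z : ℂ => ρ ^ 2 - ‖z‖ ^ 2) 0 t
      = 2 * Real.pi * (ρ ^ 2 * t - t ^ 3) := by
    intro t ht
    have : Real.circleAverage (fun z : ℂ => ρ ^ 2 - ‖z‖ ^ 2) 0 t = ρ ^ 2 - t ^ 2 := by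
      apply Real.circleAverage_const_on_circle
      intro x hx
      rw [mem_sphere_zero_iff_norm] at hx
      rw [hx, sq_abs]
    rw [this]; ring
  rw [intervalIntegral.integral_congr h1, intervalIntegral.integral_const_mul,
    intervalIntegral.integral_sub, intervalIntegral.integral_const_mul, integral_id, integral_pow]
  · ring_nf
  · exact (by fun_prop : Continuous fun t : ℝ => ρ ^ 2 * t).intervalIntegrable _ _
  · exact (by fun_prop : Continuous fun t : ℝ => t ^ 3).intervalIntegrable _ _

lemma area_upper {H H' : ℂ → ℂ} {S : Set ℂ} (hS : MeasurableSet S)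
    (hH : ∀ u ∈ S, HasDerivAt H (H' u) u) (hinj : InjOn H S) {ρ : ℝ} (hρ : 0 ≤ ρ)
    (hIntg : MeasureTheory.IntegrableOn (fun u => (ρ ^ 2 - ‖H u‖ ^ 2) * ‖H' u‖ ^ 2) S) :
    ∫ u in S, (ρ ^ 2 - ‖H u‖ ^ 2) * ‖H' u‖ ^ 2 ≤ Real.pi * ρ ^ 4 / 2 := by
  have hfd : ∀ u ∈ S, HasFDerivWithinAt H
      ((ContinuousLinearMap.toSpanSingleton ℂ (H' u)).restrictScalars ℝ : ℂ →L[ℝ] ℂ) S u :=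
    fun u hu => ((hH u hu).hasFDerivAt.restrictScalars ℝ).hasFDerivWithinAt
  have e := MeasureTheory.integral_image_eq_integral_abs_det_fderiv_smul
    (MeasureTheory.volume : MeasureTheory.Measure ℂ) hS hfd hinj (fun z => ρ ^ 2 - ‖z‖ ^ 2)
  have ei := MeasureTheory.integrableOn_image_iff_integrableOn_abs_det_fderiv_smul
    (MeasureTheory.volume : MeasureTheory.Measure ℂ) hS hfd hinj (fun z => ρ ^ 2 - ‖z‖ ^ 2)
  simp only [det_cmul, smul_eq_mul] at e ei
  have hIntg' : MeasureTheory.IntegrableOn (fun z : ℂ => ρ ^ 2 - ‖z‖ ^ 2) (H '' S) := by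
    rw [ei]
    simpa only [mul_comm] using hIntg
  have e2 : ∫ u in S, (ρ ^ 2 - ‖H u‖ ^ 2) * ‖H' u‖ ^ 2 = ∫ z in H '' S, (ρ ^ 2 - ‖z‖ ^ 2) := by
    rw [e]; simp only [mul_comm]
  rw [e2, ← disc_integral hρ]
  have hm : MeasurableSet (H '' S) :=
    MeasureTheory.measurable_image_of_fderivWithin hS hfd hinj
  have hB : MeasurableSet {z : ℂ | 0 < ‖z‖ ∧ ‖z‖ < ρ} :=
    ((isOpen_lt continuous_const continuous_norm).inter
      (isOpen_lt continuous_norm continuous_const)).measurableSet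
  have hBi : MeasureTheory.IntegrableOn (fun z : ℂ => ρ ^ 2 - ‖z‖ ^ 2)
      {z : ℂ | 0 < ‖z‖ ∧ ‖z‖ < ρ} := by
    refine MeasureTheory.IntegrableOn.mono_set (t := Metric.closedBall 0 ρ) ?_ ?_
    · exact (by fun_prop : Continuous fun z : ℂ => ρ ^ 2 - ‖z‖ ^ 2).continuousOn.integrableOn_compact
        (isCompact_closedBall _ _)
    · intro z hz; simpa using hz.2.le
  rw [← MeasureTheory.integral_indicator hm, ← MeasureTheory.integral_indicator hB]
  refine MeasureTheory.integral_mono_ae ((MeasureTheory.integrable_indicator_iff hm).2 hIntg')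
    ((MeasureTheory.integrable_indicator_iff hB).2 hBi) ?_
  have h0 : ∀ᵐ z : ℂ, z ≠ 0 := by
    simp [MeasureTheory.ae_iff]
  filter_upwards [h0] with z hz
  have hz' : 0 < ‖z‖ := norm_pos_iff.2 hz
  by_cases hzB : ‖z‖ < ρ
  · rw [indicator_of_mem (s := {z : ℂ | 0 < ‖z‖ ∧ ‖z‖ < ρ}) ⟨hz', hzB⟩]
    by_cases hzS : z ∈ H '' S
    · rw [indicator_of_mem hzS]
    · rw [indicator_of_notMem hzS]
      nlinarith
  · rw [indicator_of_notMem (s := {z : ℂ | 0 < ‖z‖ ∧ ‖z‖ < ρ}) (fun h => hzB h.2)]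
    by_cases hzS : z ∈ H '' S
    · rw [indicator_of_mem hzS]
      nlinarith [not_lt.1 hzB]
    · rw [indicator_of_notMem hzS]

lemma area_calc {b C δ τ : ℝ} (hδ : 0 < δ) (hδτ : δ ≤ τ) :
    ∫ t in δ..τ, ((δ ^ 2)⁻¹ * (t ^ 3)⁻¹ - (t ^ 5)⁻¹ + b * (δ ^ 2)⁻¹ * t - C * (t ^ 2)⁻¹) =
    (-(δ ^ 2)⁻¹ * (τ ^ 2)⁻¹ / 2 + (τ ^ 4)⁻¹ / 4 + b * (δ ^ 2)⁻¹ * τ ^ 2 / 2 + C * τ⁻¹)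
    - (-(δ ^ 2)⁻¹ * (δ ^ 2)⁻¹ / 2 + (δ ^ 4)⁻¹ / 4 + b * (δ ^ 2)⁻¹ * δ ^ 2 / 2 + C * δ⁻¹) := by
  have hne : ∀ t ∈ uIcc δ τ, t ≠ 0 := by
    intro t ht
    rw [uIcc_of_le hδτ] at ht
    exact (hδ.trans_le ht.1).ne'
  refine intervalIntegral.integral_eq_sub_of_hasDerivAt (f := fun t : ℝ =>
    -(δ ^ 2)⁻¹ * (t ^ 2)⁻¹ / 2 + (t ^ 4)⁻¹ / 4 + b * (δ ^ 2)⁻¹ * t ^ 2 / 2 + C * t⁻¹) ?_ ?_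
  · intro t ht
    have h0 := hne t ht
    have h2 := ((hasDerivAt_pow 2 t).fun_inv (pow_ne_zero 2 h0)).const_mul (-(δ ^ 2)⁻¹)
    have h4 := (hasDerivAt_pow 4 t).fun_inv (pow_ne_zero 4 h0)
    have h5 := (hasDerivAt_pow 2 t).const_mul (b * (δ ^ 2)⁻¹)
    have h6 := (hasDerivAt_inv h0).const_mul C
    have := (((h2.div_const 2).fun_add (h4.div_const 4)).fun_add (h5.div_const 2)).fun_add h6
    convert! this using 1
    field_simp
    ring
  · apply ContinuousOn.intervalIntegrable
    have h1 : ContinuousOn (fun t : ℝ => t⁻¹) (uIcc δ τ) := continuousOn_inv₀.mono hne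
    simp_rw [← inv_pow]
    fun_prop

lemma area_step {h : ℂ → ℂ} (hd : DifferentiableOn ℂ h (Metric.ball 0 1))
    (hinj : InjOn (fun u : ℂ => u⁻¹ + h u) (Metric.ball 0 1 \ {0}))
    {τ M : ℝ} (hτ1 : τ < 1) (hM0 : 0 ≤ M)
    (hM : ∀ u : ℂ, ‖u‖ ≤ τ → ‖h u‖ ≤ M * ‖u‖) (hM' : ∀ u : ℂ, ‖u‖ ≤ τ → ‖deriv h u‖ ≤ M)
    {δ : ℝ} (hδ : 0 < δ) (hδτ : δ < τ) :
    ‖deriv h 0‖ ^ 2 * τ ^ 2 ≤ (τ ^ 2)⁻¹ + ‖deriv h 0‖ ^ 2 * δ ^ 2 +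
      2 * (‖deriv h 0‖ ^ 2 + (M ^ 2 + (2 * M + M ^ 2) ^ 2)) * δ := by
  set b := ‖deriv h 0‖ ^ 2 with hb
  set C := M ^ 2 + (2 * M + M ^ 2) ^ 2 with hC
  have hb0 : 0 ≤ b := by positivity
  have hC0 : 0 ≤ C := by positivity
  have hτ0 : 0 < τ := hδ.trans hδτ
  set Φ : ℂ → ℝ := fun u => ((δ ^ 2)⁻¹ - ‖u⁻¹ + h u‖ ^ 2) * ‖-(u ^ 2)⁻¹ + deriv h u‖ ^ 2 with hΦ
  set Acl := {z : ℂ | δ ≤ ‖z‖ ∧ ‖z‖ ≤ τ} with hAcl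
  set A := {z : ℂ | δ < ‖z‖ ∧ ‖z‖ < τ} with hA
  have hne : ∀ u ∈ Acl, u ≠ 0 := fun u hu => norm_pos_iff.1 (hδ.trans_le hu.1)
  have hAb : Acl ⊆ Metric.ball 0 1 := fun u hu => by
    rw [mem_ball_zero_iff]; exact hu.2.trans_lt hτ1
  have hAA : A ⊆ Acl := fun u hu => ⟨hu.1.le, hu.2.le⟩
  have hΦc : ContinuousOn Φ Acl := by
    have h1 := hd.continuousOn.mono hAb
    have h2 := (hd.deriv Metric.isOpen_ball).continuousOn.mono hAb
    have h3 : ContinuousOn (fun u : ℂ => u⁻¹) Acl :=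
      continuousOn_inv₀.mono fun u hu => hne u hu
    have h4 : ContinuousOn (fun u : ℂ => (u ^ 2)⁻¹) Acl := by
      simp_rw [← inv_pow]; exact h3.pow 2
    exact (continuousOn_const.sub ((h3.add h1).norm.pow 2)).mul ((h4.neg.add h2).norm.pow 2)
  have hAclc : IsCompact Acl := by
    refine (isCompact_closedBall (0 : ℂ) τ).of_isClosed_subset ?_ ?_
    · exact (isClosed_le continuous_const continuous_norm).inter
        (isClosed_le continuous_norm continuous_const)
    · intro u hu; simpa using hu.2
  have hAm : MeasurableSet A :=
    ((isOpen_lt continuous_const continuous_norm).inter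
      (isOpen_lt continuous_norm continuous_const)).measurableSet
  have up : ∫ u in A, Φ u ≤ Real.pi * δ⁻¹ ^ 4 / 2 := by
    have := area_upper (H := fun u => u⁻¹ + h u) (H' := fun u => -(u ^ 2)⁻¹ + deriv h u)
      (S := A) hAm ?_ (hinj.mono ?_) (ρ := δ⁻¹) (by positivity) ?_
    · simpa only [inv_pow] using this
    · intro u hu
      exact (hasDerivAt_inv (hne u (hAA hu))).fun_add
        (hd.differentiableAt (Metric.isOpen_ball.mem_nhds (hAb (hAA hu)))).hasDerivAt
    · intro u hu
      exact ⟨hAb (hAA hu), hne u (hAA hu)⟩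
    · simp only [inv_pow]
      exact (hΦc.integrableOn_compact hAclc).mono_set hAA
  have hlow : ∫ t in δ..τ, 2 * Real.pi * ((δ ^ 2)⁻¹ * (t ^ 3)⁻¹ - (t ^ 5)⁻¹ + b * (δ ^ 2)⁻¹ * t
      - (b + C) * (t ^ 2)⁻¹) ≤ ∫ u in A, Φ u := by
    rw [polar_annulus hδ.le hδτ.le hΦc]
    have hne' : ∀ t ∈ uIcc δ τ, t ≠ 0 := by
      intro t ht
      rw [uIcc_of_le hδτ.le] at ht
      exact (hδ.trans_le ht.1).ne'
    refine intervalIntegral.integral_mono_on hδτ.le ?_ ?_ ?_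
    · apply ContinuousOn.intervalIntegrable
      have h1 : ContinuousOn (fun t : ℝ => t⁻¹) (uIcc δ τ) := continuousOn_inv₀.mono hne'
      simp_rw [← inv_pow]
      fun_prop
    · apply ContinuousOn.intervalIntegrable
      rw [uIcc_of_le hδτ.le]
      refine ContinuousOn.mul (by fun_prop) ?_
      refine Real.ContinuousOn.circleAverage (s := Icc δ τ) ?_ (fun r hr => hδ.le.trans hr.1)
      simpa using hΦc
    · intro t ht
      have ht0 : 0 < t := hδ.trans_le ht.1
      have ht1 : t ≤ 1 := ht.2.trans hτ1.le
      have := circle_estimate hd hτ1 hM0 hM hM' hδ ht.1 ht.2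
      rw [mul_assoc (2 * Real.pi) t]
      refine mul_le_mul_of_nonneg_left ?_ (by positivity)
      refine le_trans ?_ (mul_le_mul_of_nonneg_left this ht0.le)
      have e : t * (((δ ^ 2)⁻¹ - (t ^ 2)⁻¹) * ((t ^ 4)⁻¹ + b) - C * (t ^ 2)⁻¹) =
        (δ ^ 2)⁻¹ * (t ^ 3)⁻¹ - (t ^ 5)⁻¹ + b * (δ ^ 2)⁻¹ * t - (b + C) * t⁻¹ := by
        field_simp
        ring
      rw [e]
      have : t⁻¹ ≤ (t ^ 2)⁻¹ := by
        apply inv_anti₀ (by positivity)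
        nlinarith
      have := mul_le_mul_of_nonneg_left this (add_nonneg hb0 hC0)
      linarith
  have key := hlow.trans up
  rw [intervalIntegral.integral_const_mul, area_calc hδ hδτ.le] at key
  have key2 : 2 * ((-(δ ^ 2)⁻¹ * (τ ^ 2)⁻¹ / 2 + (τ ^ 4)⁻¹ / 4 + b * (δ ^ 2)⁻¹ * τ ^ 2 / 2 + (b + C) * τ⁻¹)
    - (-(δ ^ 2)⁻¹ * (δ ^ 2)⁻¹ / 2 + (δ ^ 4)⁻¹ / 4 + b * (δ ^ 2)⁻¹ * δ ^ 2 / 2 + (b + C) * δ⁻¹)) ≤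
      δ⁻¹ ^ 4 / 2 := by
    have hpi := Real.pi_pos
    refine le_of_mul_le_mul_left ?_ hpi
    linarith
  have key3 := mul_le_mul_of_nonneg_left key2 (sq_nonneg δ)
  have e1 : δ ^ 2 * (2 * ((-(δ ^ 2)⁻¹ * (τ ^ 2)⁻¹ / 2 + (τ ^ 4)⁻¹ / 4 + b * (δ ^ 2)⁻¹ * τ ^ 2 / 2 + (b + C) * τ⁻¹)
    - (-(δ ^ 2)⁻¹ * (δ ^ 2)⁻¹ / 2 + (δ ^ 4)⁻¹ / 4 + b * (δ ^ 2)⁻¹ * δ ^ 2 / 2 + (b + C) * δ⁻¹))) =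
      - (τ ^ 2)⁻¹ + b * τ ^ 2 + (δ ^ 2 * (τ ^ 4)⁻¹ / 2 + 2 * δ ^ 2 * (b + C) * τ⁻¹) + (δ ^ 2)⁻¹ / 2
        - b * δ ^ 2 - 2 * (b + C) * δ := by
    field_simp
    ring
  have e2 : δ ^ 2 * (δ⁻¹ ^ 4 / 2) = (δ ^ 2)⁻¹ / 2 := by
    field_simp
  rw [e1, e2] at key3
  have : 0 ≤ δ ^ 2 * (τ ^ 4)⁻¹ / 2 + 2 * δ ^ 2 * (b + C) * τ⁻¹ := by positivity
  linarith

theorem area_theorem {h : ℂ → ℂ} (hd : DifferentiableOn ℂ h (Metric.ball 0 1)) (h0 : h 0 = 0)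
    (hinj : InjOn (fun u : ℂ => u⁻¹ + h u) (Metric.ball 0 1 \ {0})) :
    ‖deriv h 0‖ ≤ 1 := by
  have hmain : ∀ τ : ℝ, 0 < τ → τ < 1 → ‖deriv h 0‖ ^ 2 * τ ^ 2 ≤ (τ ^ 2)⁻¹ := by
    intro τ hτ hτ1
    have hsub : Metric.closedBall (0 : ℂ) τ ⊆ Metric.ball 0 1 := Metric.closedBall_subset_ball hτ1
    have hsl : DifferentiableOn ℂ (dslope h 0) (Metric.ball 0 1) :=
      (Complex.differentiableOn_dslope (Metric.ball_mem_nhds 0 one_pos)).2 hd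
    obtain ⟨M1, hM1⟩ := (isCompact_closedBall (0 : ℂ) τ).exists_bound_of_continuousOn
      (hsl.continuousOn.mono hsub)
    obtain ⟨M2, hM2⟩ := (isCompact_closedBall (0 : ℂ) τ).exists_bound_of_continuousOn
      ((hd.deriv Metric.isOpen_ball).continuousOn.mono hsub)
    set M := max 0 (max M1 M2)
    have hM : ∀ u : ℂ, ‖u‖ ≤ τ → ‖h u‖ ≤ M * ‖u‖ := by
      intro u hu
      have h1 : h u = u * dslope h 0 u := by
        have := sub_smul_dslope h 0 u
        simpa [h0] using this.symm
      rw [h1, norm_mul, mul_comm]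
      gcongr
      exact (hM1 u (by simpa using hu)).trans ((le_max_left _ _).trans (le_max_right _ _))
    have hM' : ∀ u : ℂ, ‖u‖ ≤ τ → ‖deriv h u‖ ≤ M := fun u hu =>
      (hM2 u (by simpa using hu)).trans ((le_max_right _ _).trans (le_max_right _ _))
    set b := ‖deriv h 0‖ ^ 2
    set C := M ^ 2 + (2 * M + M ^ 2) ^ 2
    have hlim : Tendsto (fun δ : ℝ => (τ ^ 2)⁻¹ + b * δ ^ 2 + 2 * (b + C) * δ) (𝓝[>] 0)
        (𝓝 ((τ ^ 2)⁻¹ + b * 0 ^ 2 + 2 * (b + C) * 0)) :=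
      ((by fun_prop : Continuous fun δ : ℝ => (τ ^ 2)⁻¹ + b * δ ^ 2 + 2 * (b + C) * δ).tendsto 0
        ).mono_left nhdsWithin_le_nhds
    have := ge_of_tendsto hlim (b := b * τ ^ 2) ?_
    · simpa using this
    · filter_upwards [Ioo_mem_nhdsGT hτ] with δ hδ
      exact area_step hd hinj hτ1 (le_max_left _ _) hM hM' hδ.1 hδ.2
  have hlim1 : Tendsto (fun τ : ℝ => ‖deriv h 0‖ ^ 2 * τ ^ 2) (𝓝[<] 1)
      (𝓝 (‖deriv h 0‖ ^ 2 * 1 ^ 2)) :=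
    ((by fun_prop : Continuous fun τ : ℝ => ‖deriv h 0‖ ^ 2 * τ ^ 2).tendsto 1
      ).mono_left nhdsWithin_le_nhds
  have hlim2 : Tendsto (fun τ : ℝ => (τ ^ 2)⁻¹) (𝓝[<] 1) (𝓝 ((1 ^ 2)⁻¹)) := by
    have : ContinuousAt (fun τ : ℝ => (τ ^ 2)⁻¹) 1 := by
      apply ContinuousAt.inv₀ (by fun_prop); norm_num
    exact this.tendsto.mono_left nhdsWithin_le_nhds
  have := le_of_tendsto_of_tendsto hlim1 hlim2 (by
    filter_upwards [Ioo_mem_nhdsLT (zero_lt_one' ℝ)] with τ hτ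
    exact hmain τ hτ.1 hτ.2)
  have h2 : ‖deriv h 0‖ ^ 2 ≤ 1 := by simpa using this
  nlinarith [norm_nonneg (deriv h 0)]


theorem koebe_coeff {φ : ℂ → ℂ} (hd : DifferentiableOn ℂ φ (Metric.ball 0 1)) (h1 : φ 0 = 1)
    (hinj : InjOn (fun u : ℂ => u * φ u) (Metric.ball 0 1)) : ‖deriv φ 0‖ ≤ 2 := by
  have hmem0 : (0 : ℂ) ∈ Metric.ball (0 : ℂ) 1 := Metric.mem_ball_self one_pos
  have hne : ∀ u ∈ Metric.ball (0 : ℂ) 1, φ u ≠ 0 := by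
    intro u hu hz
    have : u = 0 := hinj hu hmem0 (by simp [hz])
    rw [this, h1] at hz
    exact one_ne_zero hz
  have hda : ∀ u ∈ Metric.ball (0 : ℂ) 1, HasDerivAt φ (deriv φ u) u := fun u hu =>
    (hd.differentiableAt (Metric.isOpen_ball.mem_nhds hu)).hasDerivAt
  have hq : DifferentiableOn ℂ (fun u => deriv φ u / φ u) (Metric.ball 0 1) :=
    (hd.deriv Metric.isOpen_ball).div hd hne
  obtain ⟨L, hL0, hL⟩ := hq.isExactOn_ball.with_val_at 0 0
  have hexp : ∀ u ∈ Metric.ball (0 : ℂ) 1, φ u * Complex.exp (-L u) = 1 := by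
    have hder : ∀ u ∈ Metric.ball (0 : ℂ) 1,
        HasDerivAt (fun u => φ u * Complex.exp (-L u)) 0 u := by
      intro u hu
      have := (hda u hu).fun_mul ((hL u hu).fun_neg.cexp)
      convert! this using 1
      have := hne u hu
      field_simp
      ring
    intro u hu
    have := (convex_ball (0 : ℂ) 1).is_const_of_fderivWithin_eq_zero (𝕜 := ℂ)
      (f := fun u => φ u * Complex.exp (-L u))
      (fun w hw => (hder w hw).differentiableAt.differentiableWithinAt)
      (fun w hw => by
        rw [fderivWithin_of_isOpen Metric.isOpen_ball hw]
        ext; simpa using (hder w hw).deriv) hu hmem0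
    rw [this, h1, hL0]; simp
  set s : ℂ → ℂ := fun u => Complex.exp (-L u / 2) with hs
  have hs2 : ∀ u ∈ Metric.ball (0 : ℂ) 1, s u ^ 2 * φ u = 1 := by
    intro u hu
    rw [← hexp u hu, hs, mul_comm]
    simp only
    rw [← Complex.exp_nat_mul]
    congr 2
    push_cast; ring
  have hsne : ∀ u, s u ≠ 0 := fun u => Complex.exp_ne_zero _
  have hsd : ∀ u ∈ Metric.ball (0 : ℂ) 1,
      HasDerivAt s (Complex.exp (-L u / 2) * (-(deriv φ u / φ u) / 2)) u := fun u hu =>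
    ((hL u hu).fun_neg.div_const 2).cexp
  have hs0 : s 0 = 1 := by simp [hs, hL0]
  have hsD : DifferentiableOn ℂ s (Metric.ball 0 1) := fun u hu =>
    (hsd u hu).differentiableAt.differentiableWithinAt
  have hds0 : deriv s 0 = - deriv φ 0 / 2 := by
    rw [(hsd 0 hmem0).deriv, hL0, h1]; simp
  have hsl : DifferentiableOn ℂ (dslope s 0) (Metric.ball 0 1) :=
    (Complex.differentiableOn_dslope (Metric.ball_mem_nhds 0 one_pos)).2 hsD
  have hsq : ∀ u ∈ Metric.ball (0 : ℂ) 1, u ^ 2 ∈ Metric.ball (0 : ℂ) 1 := by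
    intro u hu
    rw [mem_ball_zero_iff] at hu ⊢
    rw [norm_pow]
    exact pow_lt_one₀ (norm_nonneg _) hu two_ne_zero
  have hcomp : DifferentiableOn ℂ (fun u : ℂ => dslope s 0 (u ^ 2)) (Metric.ball 0 1) :=
    hsl.comp (by fun_prop) hsq
  set h : ℂ → ℂ := fun u => u * dslope s 0 (u ^ 2) with hh
  have hhd : DifferentiableOn ℂ h (Metric.ball 0 1) := differentiableOn_id.mul hcomp
  have hh0 : h 0 = 0 := by simp [hh]
  have hdh : deriv h 0 = deriv s 0 := by
    have h2 := (hasDerivAt_id (0 : ℂ)).fun_mul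
      (hcomp.differentiableAt (Metric.isOpen_ball.mem_nhds hmem0)).hasDerivAt
    have h3 := h2.deriv
    simpa [hh] using h3
  have hval : ∀ u : ℂ, u ≠ 0 → u⁻¹ + h u = s (u ^ 2) / u := by
    intro u hu
    have h4 := sub_smul_dslope s 0 (u ^ 2)
    rw [sub_zero, smul_eq_mul, hs0] at h4
    have h5 : u * h u = s (u ^ 2) - 1 := by rw [← h4, hh]; ring
    field_simp
    rw [h5]; ring
  have hA := area_theorem hhd hh0 ?_
  · rw [hdh, hds0, norm_div, norm_neg] at hA
    simp at hA
    linarith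
  · rintro u ⟨hu, hu0⟩ v ⟨hv, hv0⟩ huv
    rw [mem_singleton_iff] at hu0 hv0
    simp only at huv
    rw [hval u hu0, hval v hv0] at huv
    have hu2 := hs2 _ (hsq u hu)
    have hv2 := hs2 _ (hsq v hv)
    have hsqs : u ^ 2 * φ (u ^ 2) = v ^ 2 * φ (v ^ 2) := by
      have h6 : (s (u ^ 2) / u) ^ 2 = (s (v ^ 2) / v) ^ 2 := by rw [huv]
      have h7 := hne _ (hsq u hu)
      have h8 := hne _ (hsq v hv)
      have h9 : s (u ^ 2) ^ 2 * v ^ 2 = s (v ^ 2) ^ 2 * u ^ 2 := by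
        field_simp at h6
        linear_combination h6
      linear_combination (-(φ (u ^ 2) * φ (v ^ 2))) * h9 + v ^ 2 * φ (v ^ 2) * hu2
        - u ^ 2 * φ (u ^ 2) * hv2
    have h10 : u ^ 2 = v ^ 2 := hinj (hsq u hu) (hsq v hv) hsqs
    rcases sq_eq_sq_iff_eq_or_eq_neg.1 h10 with h | h
    · exact h
    · exfalso
      rw [h10, h] at huv
      have := hsne (v ^ 2)
      field_simp at huv
      norm_num at huv

theorem koebe_quarter' {φ : ℂ → ℂ} (hd : DifferentiableOn ℂ φ (Metric.ball 0 1)) (h1 : φ 0 = 1)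
    (hinj : InjOn (fun u : ℂ => u * φ u) (Metric.ball 0 1)) {ω : ℂ}
    (hω : ∀ u ∈ Metric.ball (0 : ℂ) 1, u * φ u ≠ ω) : ‖ω⁻¹‖ ≤ 4 := by
  have hmem0 : (0 : ℂ) ∈ Metric.ball (0 : ℂ) 1 := Metric.mem_ball_self one_pos
  have hω0 : ω ≠ 0 := by
    have := hω 0 hmem0
    simpa using this.symm
  have hne : ∀ u ∈ Metric.ball (0 : ℂ) 1, 1 - u * φ u / ω ≠ 0 := by
    intro u hu h
    apply hω u hu
    field_simp at h
    linear_combination -h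
  have hden : DifferentiableOn ℂ (fun u : ℂ => 1 - u * φ u / ω) (Metric.ball 0 1) := by fun_prop
  have hd2 : DifferentiableOn ℂ (fun u => φ u / (1 - u * φ u / ω)) (Metric.ball 0 1) :=
    hd.div hden hne
  have k1 := koebe_coeff hd h1 hinj
  have k2 := koebe_coeff hd2 (by simp [h1]) ?_
  · have hφ : HasDerivAt φ (deriv φ 0) 0 :=
      (hd.differentiableAt (Metric.isOpen_ball.mem_nhds hmem0)).hasDerivAt
    have h3 := hφ.fun_div (((((hasDerivAt_id' (0 : ℂ)).fun_mul hφ).div_const ω)).const_sub 1)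
      (hne 0 hmem0)
    have h4 : deriv (fun u => φ u / (1 - u * φ u / ω)) 0 = deriv φ 0 + ω⁻¹ := by
      rw [h3.deriv, h1]; simp
    rw [h4] at k2
    calc ‖ω⁻¹‖ = ‖(deriv φ 0 + ω⁻¹) - deriv φ 0‖ := by congr 1; ring
      _ ≤ ‖deriv φ 0 + ω⁻¹‖ + ‖deriv φ 0‖ := norm_sub_le _ _
      _ ≤ 4 := by linarith
  · intro u hu v hv huv
    apply hinj hu hv
    simp only at huv ⊢
    have a := hne u hu
    have b := hne v hv
    rw [← mul_div_assoc, ← mul_div_assoc, div_eq_div_iff a b] at huv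
    linear_combination huv

/-- For a `ℂ`-hull `K` with `{0} ⊊ K`: `|e^{cap(K)} g_K(z) − z| ≤ 5 e^{cap(K)}`
for every `z ∈ ℂ \ K`. -/
theorem hull_map_displacement_bound (K : Set ℂ) (g : ℂ → ℂ) (cap : ℝ)
    (hK : IsCHull K) (h0 : ({0} : Set ℂ) ⊂ K)
    (hg : IsWholePlaneCapacityMap K g cap) :
    ∀ z ∉ K, ‖(Real.exp cap : ℂ) * g z - z‖ ≤ 5 * Real.exp cap := by
  obtain ⟨hKc, -, -⟩ := hK
  obtain ⟨hgd, hgi, hgim, hglim⟩ := hg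
  have h0K : (0 : ℂ) ∈ K := h0.1 rfl
  set R : ℝ := Real.exp cap with hR
  have hR0 : 0 < R := Real.exp_pos _
  have hRc : (R : ℂ) ≠ 0 := by exact_mod_cast hR0.ne'
  have hKo : IsOpen Kᶜ := hKc.isClosed.isOpen_compl
  have hg1 : ∀ z ∉ K, 1 < ‖g z‖ := fun z hz => by
    have : g z ∈ g '' Kᶜ := mem_image_of_mem g hz
    rw [hgim] at this; exact this
  have hgne : ∀ z ∉ K, g z ≠ 0 := fun z hz => norm_pos_iff.1 (zero_lt_one.trans (hg1 z hz))
  have hinvlim : Tendsto (fun ζ : ℂ => ζ⁻¹) (𝓝[≠] 0) (Bornology.cobounded ℂ) :=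
    tendsto_inv₀_nhdsNE_zero
  have hevK : ∀ᶠ ζ : ℂ in 𝓝[≠] 0, ζ⁻¹ ∉ K :=
    hinvlim (Bornology.isBounded_def.1 hKc.isBounded)
  let U : Set ℂ := {ζ | ζ = 0 ∨ ζ⁻¹ ∉ K}
  have hU : IsOpen U := by
    rw [isOpen_iff_mem_nhds]
    intro ζ hζ
    by_cases hz : ζ = 0
    · rw [hz]
      have := eventually_nhdsWithin_iff.1 hevK
      filter_upwards [this] with x hx
      by_cases hx0 : x = 0
      · exact Or.inl hx0
      · exact Or.inr (hx hx0)
    · have h2 : ζ⁻¹ ∈ Kᶜ := hζ.resolve_left hz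
      filter_upwards [(continuousAt_inv₀ hz).preimage_mem_nhds (hKo.mem_nhds h2)] with x hx
      exact Or.inr hx
  let p : ℂ → ℂ := fun ζ => if ζ = 0 then 0 else (g ζ⁻¹)⁻¹
  have hp0 : p 0 = 0 := if_pos rfl
  have hpne : ∀ ζ, ζ ≠ 0 → p ζ = (g ζ⁻¹)⁻¹ := fun ζ h => if_neg h
  have hpd0 : HasDerivAt p (R : ℂ) 0 := by
    rw [hasDerivAt_iff_tendsto_slope]
    refine (hglim.comp hinvlim).congr' ?_
    filter_upwards [self_mem_nhdsWithin] with ζ hζ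
    rw [slope_def_field, hp0, hpne ζ hζ]
    simp [div_eq_mul_inv, mul_comm]
  have hpd : DifferentiableOn ℂ p U := by
    intro ζ hζ
    apply DifferentiableAt.differentiableWithinAt
    by_cases hz : ζ = 0
    · rw [hz]; exact hpd0.differentiableAt
    · have h2 : ζ⁻¹ ∈ Kᶜ := hζ.resolve_left hz
      have h3 : DifferentiableAt ℂ g ζ⁻¹ := hgd.differentiableAt (hKo.mem_nhds h2)
      have h4 : DifferentiableAt ℂ (fun ζ => (g ζ⁻¹)⁻¹) ζ :=
        (h3.comp ζ (differentiableAt_inv hz)).fun_inv (hgne _ h2)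
      refine h4.congr_of_eventuallyEq ?_
      filter_upwards [isOpen_ne.mem_nhds hz] with x hx using hpne x hx
  have hpi : InjOn p U := by
    intro x hx y hy hxy
    by_cases hx0 : x = 0
    · by_cases hy0 : y = 0
      · rw [hx0, hy0]
      · exfalso
        rw [hx0, hp0, hpne y hy0] at hxy
        exact inv_ne_zero (hgne _ (hy.resolve_left hy0)) hxy.symm
    · by_cases hy0 : y = 0
      · exfalso
        rw [hy0, hp0, hpne x hx0] at hxy
        exact inv_ne_zero (hgne _ (hx.resolve_left hx0)) hxy
      · rw [hpne x hx0, hpne y hy0, inv_inj] at hxy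
        exact inv_injective (hgi (hx.resolve_left hx0) (hy.resolve_left hy0) hxy)
  have hpm : ∀ ζ ∈ U, ‖p ζ‖ < 1 := by
    intro ζ hζ
    by_cases hz : ζ = 0
    · rw [hz, hp0]; simp
    · rw [hpne ζ hz, norm_inv]
      exact inv_lt_one_of_one_lt₀ (hg1 _ (hζ.resolve_left hz))
  have hps : ∀ u ∈ Metric.ball (0 : ℂ) 1, ∃ ζ ∈ U, p ζ = u := by
    intro u hu
    by_cases hu0 : u = 0
    · exact ⟨0, Or.inl rfl, by rw [hp0, hu0]⟩
    · have h2 : u⁻¹ ∈ g '' Kᶜ := by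
        rw [hgim, mem_setOf_eq, norm_inv]
        exact (one_lt_inv₀ (norm_pos_iff.2 hu0)).2 (by simpa using hu)
      obtain ⟨z, hz, hzu⟩ := h2
      have hz0 : z ≠ 0 := fun h => hz (h ▸ h0K)
      refine ⟨z⁻¹, Or.inr (by rwa [inv_inv]), ?_⟩
      rw [hpne _ (inv_ne_zero hz0), inv_inv, hzu, inv_inv]
  let F : ℂ → ℂ := Function.invFunOn p U
  have hF : ∀ ζ ∈ U, F (p ζ) = ζ := fun ζ hζ => hpi.leftInvOn_invFunOn hζ
  have hFU : ∀ u ∈ Metric.ball (0 : ℂ) 1, F u ∈ U ∧ p (F u) = u := by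
    intro u hu
    obtain ⟨ζ, hζ, rfl⟩ := hps u hu
    rw [hF ζ hζ]; exact ⟨hζ, rfl⟩
  have hFd : DifferentiableOn ℂ F (Metric.ball 0 1) := by
    intro u hu
    obtain ⟨ζ, hζ, rfl⟩ := hps u hu
    exact (inv_differentiableAt hU hpd hpi hF hζ).differentiableWithinAt
  have h0U : (0 : ℂ) ∈ U := Or.inl rfl
  have hmem0 : (0 : ℂ) ∈ Metric.ball (0 : ℂ) 1 := Metric.mem_ball_self one_pos
  have hF0 : F 0 = 0 := by
    have := hF 0 h0U
    rwa [hp0] at this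
  have hFd0 : deriv F 0 * R = 1 := by
    have h2 : HasDerivAt F (deriv F 0) (p 0) := by
      rw [hp0]
      exact (hFd.differentiableAt (Metric.isOpen_ball.mem_nhds hmem0)).hasDerivAt
    have h3 : HasDerivAt (F ∘ p) (deriv F 0 * R) 0 := h2.comp 0 hpd0
    have h4 : HasDerivAt (F ∘ p) 1 0 := by
      refine (hasDerivAt_id (0 : ℂ)).congr_of_eventuallyEq ?_
      filter_upwards [hU.mem_nhds h0U] with ζ hζ using hF ζ hζ
    exact h3.unique h4
  set φ : ℂ → ℂ := fun u => R * dslope F 0 u with hφ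
  have hφd : DifferentiableOn ℂ φ (Metric.ball 0 1) :=
    ((Complex.differentiableOn_dslope (Metric.ball_mem_nhds 0 one_pos)).2 hFd).const_mul _
  have hφ0 : φ 0 = 1 := by
    simp only [hφ, dslope_same]; rw [mul_comm]; exact hFd0
  have hφF : ∀ u, u * φ u = R * F u := by
    intro u
    have := sub_smul_dslope F 0 u
    rw [sub_zero, smul_eq_mul, hF0, sub_zero] at this
    rw [← this, hφ]; ring
  have hφi : InjOn (fun u : ℂ => u * φ u) (Metric.ball 0 1) := by
    intro u hu v hv huv
    simp only [hφF] at huv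
    have h2 := mul_left_cancel₀ hRc huv
    rw [← (hFU u hu).2, ← (hFU v hv).2, h2]
  have hK4 : ∀ k ∈ K, ‖k‖ ≤ 4 * R := by
    intro k hk
    by_cases hk0 : k = 0
    · rw [hk0, norm_zero]; positivity
    have := koebe_quarter' hφd hφ0 hφi (ω := R / k) ?_
    · rw [inv_div, norm_div, Complex.norm_real, Real.norm_of_nonneg hR0.le,
        div_le_iff₀ hR0] at this
      exact this
    · intro u hu h
      rw [hφF, div_eq_mul_inv] at h
      have h2 := mul_left_cancel₀ hRc h
      have h3 := (hFU u hu).1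
      rw [h2] at h3
      rcases h3 with h3 | h3
      · exact inv_ne_zero hk0 h3
      · rw [inv_inv] at h3; exact h3 hk
  have hφne : ∀ u ∈ Metric.ball (0 : ℂ) 1, φ u ≠ 0 := by
    intro u hu hz
    have : u = 0 := hφi hu hmem0 (by simp [hz])
    rw [this, hφ0] at hz
    exact one_ne_zero hz
  have hid : DifferentiableOn ℂ (fun u => (φ u)⁻¹) (Metric.ball 0 1) := hφd.fun_inv hφne
  set E : ℂ → ℂ := fun u => -(R * dslope (fun u => (φ u)⁻¹) 0 u) with hE
  have hEd : DifferentiableOn ℂ E (Metric.ball 0 1) :=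
    (((Complex.differentiableOn_dslope (Metric.ball_mem_nhds 0 one_pos)).2 hid).const_mul _).neg
  have hEv : ∀ u ∈ Metric.ball (0 : ℂ) 1, u ≠ 0 → E u = R * u⁻¹ - (F u)⁻¹ := by
    intro u hu hu0
    have h2 := sub_smul_dslope (fun u => (φ u)⁻¹) 0 u
    rw [sub_zero, smul_eq_mul, hφ0] at h2
    have h3 : F u = u * φ u / R := by rw [hφF]; field_simp
    have h4 := hφne u hu
    apply mul_left_cancel₀ hu0
    have h5 : u * E u = -R * ((φ u)⁻¹ - 1⁻¹) := by rw [← h2, hE]; ring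
    rw [h5, h3]
    field_simp
    ring
  intro z hz
  have hz0 : z ≠ 0 := fun h => hz (h ▸ h0K)
  have hzU : z⁻¹ ∈ U := Or.inr (by rwa [inv_inv])
  set u := p z⁻¹ with hu
  have hug : u = (g z)⁻¹ := by rw [hu, hpne _ (inv_ne_zero hz0), inv_inv]
  have hub : u ∈ Metric.ball (0 : ℂ) 1 := by rw [mem_ball_zero_iff]; exact hpm _ hzU
  have hu0 : u ≠ 0 := by rw [hug]; exact inv_ne_zero (hgne z hz)
  have hEu : E u = R * g z - z := by
    rw [hEv u hub hu0, hu, hF _ hzU, ← hu, hug, inv_inv, inv_inv]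
  rw [← hEu]
  refine le_of_forall_pos_le_add fun ε hε => ?_
  -- points near the unit circle are mapped close to `K`
  set a : ℝ := (4 * R + ε)⁻¹ with ha
  have ha0 : 0 < a := by positivity
  have hcb : Metric.closedBall (0 : ℂ) a ⊆ U := by
    intro ζ hζ
    by_cases h : ζ = 0
    · exact Or.inl h
    · refine Or.inr fun hk => ?_
      have h2 := hK4 _ hk
      rw [norm_inv] at h2
      rw [mem_closedBall_zero_iff] at hζ
      have h3 : a⁻¹ ≤ ‖ζ‖⁻¹ := inv_anti₀ (norm_pos_iff.2 h) hζ
      rw [ha, inv_inv] at h3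
      linarith
  obtain ⟨x, hx, hxmax⟩ := (isCompact_closedBall (0 : ℂ) a).exists_isMaxOn
    ⟨0, Metric.mem_closedBall_self ha0.le⟩ (hpd.continuousOn.mono hcb).norm
  have hr0 := hpm x (hcb hx)
  have hstep : ∀ r : ℝ, max ‖p x‖ ‖u‖ < r → r < 1 → ‖E u‖ ≤ R * r⁻¹ + (4 * R + ε) := by
    intro r hr hr1
    have hrx : ‖p x‖ < r := (le_max_left _ _).trans_lt hr
    have hru : ‖u‖ < r := (le_max_right _ _).trans_lt hr
    have hrpos : 0 < r := (norm_nonneg _).trans_lt hru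
    refine Complex.norm_le_of_forall_mem_frontier_norm_le (U := Metric.ball (0 : ℂ) r)
      Metric.isBounded_ball (hEd.diffContOnCl_ball (Metric.closedBall_subset_ball hr1)) ?_
      (subset_closure (by simpa using hru))
    intro v hv
    rw [frontier_ball _ hrpos.ne', mem_sphere_zero_iff_norm] at hv
    have hvb : v ∈ Metric.ball (0 : ℂ) 1 := by rw [mem_ball_zero_iff, hv]; exact hr1
    have hv0 : v ≠ 0 := norm_pos_iff.1 (hv ▸ hrpos)
    rw [hEv v hvb hv0]
    refine (norm_sub_le _ _).trans ?_
    rw [norm_mul, norm_inv, norm_inv, hv, Complex.norm_real, Real.norm_of_nonneg hR0.le]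
    gcongr
    have h2 : a < ‖F v‖ := by
      by_contra hcon
      have h3 := hxmax (show F v ∈ Metric.closedBall (0 : ℂ) a by
        rw [mem_closedBall_zero_iff]; exact not_lt.1 hcon)
      simp only [mem_setOf_eq] at h3
      rw [(hFU v hvb).2, hv] at h3
      linarith
    have h4 := inv_anti₀ ha0 h2.le
    rwa [ha, inv_inv] at h4
  have hlim : Tendsto (fun r : ℝ => R * r⁻¹ + (4 * R + ε)) (𝓝[<] 1)
      (𝓝 (R * 1⁻¹ + (4 * R + ε))) := by
    have : ContinuousAt (fun r : ℝ => R * r⁻¹ + (4 * R + ε)) 1 :=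
      (continuousAt_const.mul (continuousAt_inv₀ one_ne_zero)).add continuousAt_const
    exact this.tendsto.mono_left nhdsWithin_le_nhds
  have hmax1 : max ‖p x‖ ‖u‖ < 1 := max_lt hr0 (by simpa using hub)
  have := ge_of_tendsto hlim (b := ‖E u‖) (by
    filter_upwards [Ioo_mem_nhdsLT hmax1] with r hr using hstep r hr.1 hr.2)
  rw [inv_one] at this
  linarith
end

section
/- Let W be a conformal map on a domain Ω ∋ 0 with W(0) = 0. There exist constants C₁ > 0 and c < 0 depending only on Ω and W such that for every ℂ-hull K with {0} ⊊ K ⊂ Ω and cap(K) ≤ c, one has |cap(W(K)) − cap(K) − log|W'(0)|| ≤ C₁ e^{cap(K)/2}. -/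
open Filter Set Topology

open Metric in
lemma aux_inj_deriv_ne_zero {U : Set ℂ} {G : ℂ → ℂ} (hU : IsOpen U) (hG : DifferentiableOn ℂ G U)
    (hinj : InjOn G U) : (∀ u ∈ U, 𝓝 (G u) ≤ map G (𝓝 u)) ∧ ∀ u ∈ U, deriv G u ≠ 0 := by
  have han : ∀ u ∈ U, AnalyticAt ℂ G u := fun u hu => hG.analyticAt (hU.mem_nhds hu)
  have hnc : ∀ u ∈ U, ¬ ∀ᶠ z in 𝓝 u, G z = G u := by
    intro u hu h
    have h2 : ∀ᶠ z in 𝓝 u, z = u := by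
      filter_upwards [h, hU.mem_nhds hu] with z hz hzU
      exact hinj hzU hu hz
    have h3 : ∀ᶠ z in 𝓝[≠] u, z = u := h2.filter_mono nhdsWithin_le_nhds
    obtain ⟨z, hz, hz'⟩ := (h3.and self_mem_nhdsWithin).exists
    exact hz' hz
  have hop : ∀ u ∈ U, 𝓝 (G u) ≤ map G (𝓝 u) := fun u hu =>
    (han u hu).eventually_constant_or_nhds_le_map_nhds.resolve_left (hnc u hu)
  refine ⟨hop, ?_⟩
  set F := Function.invFunOn G U with hF
  have hFG : ∀ u ∈ U, F (G u) = u := fun u hu => hinj.leftInvOn_invFunOn hu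
  have hFc : ∀ u ∈ U, ContinuousAt F (G u) := by
    intro u hu
    have : Tendsto F (map G (𝓝 u)) (𝓝 (F (G u))) := by
      rw [tendsto_map'_iff, hFG u hu]
      refine tendsto_id.congr' ?_
      filter_upwards [hU.mem_nhds hu] with z hz
      simp [hFG z hz]
    exact this.mono_left (hop u hu)
  have hright : ∀ u ∈ U, ∀ᶠ y in 𝓝 (G u), G (F y) = y ∧ F y ∈ U := by
    intro u hu
    refine (hop u hu) ?_
    rw [mem_map]
    filter_upwards [hU.mem_nhds hu] with z hz
    simp [hFG z hz, hz]
  have hFd : ∀ u ∈ U, deriv G u ≠ 0 → DifferentiableAt ℂ F (G u) := by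
    intro u hu hd
    have h1 : HasDerivAt G (deriv G u) (F (G u)) := by
      rw [hFG u hu]; exact (han u hu).differentiableAt.hasDerivAt
    exact (HasDerivAt.of_local_left_inverse (hFc u hu) h1 hd
      ((hright u hu).mono fun y hy => hy.1)).differentiableAt
  intro u hu
  have hdan : AnalyticAt ℂ (deriv G) u := (han u hu).deriv
  have hne : ∀ᶠ z in 𝓝[≠] u, deriv G z ≠ 0 := by
    rcases hdan.eventually_eq_zero_or_eventually_ne_zero with h | h
    · exfalso
      apply hnc u hu
      obtain ⟨e, he, hball⟩ := Metric.eventually_nhds_iff_ball.1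
        (h.and (hU.mem_nhds hu))
      filter_upwards [ball_mem_nhds u he] with z hz
      refine (convex_ball u e).is_const_of_fderivWithin_eq_zero (𝕜 := ℂ) (f := G) ?_ ?_ hz
        (mem_ball_self he)
      · exact hG.mono fun z hz => (hball z hz).2
      · intro x hx
        rw [fderivWithin_of_isOpen isOpen_ball hx]
        ext
        simp [(hball x hx).1]
    · exact h
  have hFan : AnalyticAt ℂ F (G u) := by
    apply Complex.analyticAt_of_differentiable_on_punctured_nhds_of_continuousAt _ (hFc u hu)
    have h1 : ∀ᶠ z in 𝓝 u, z ≠ u → deriv G z ≠ 0 := eventually_nhdsWithin_iff.1 hne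
    have h2 : ∀ᶠ y in 𝓝 (G u), F y ≠ u → deriv G (F y) ≠ 0 := by
      have := hFc u hu
      unfold ContinuousAt at this
      rw [hFG u hu] at this
      exact this.eventually h1
    rw [eventually_nhdsWithin_iff]
    filter_upwards [h2, hright u hu] with y hy hy2 hyne
    have h3 : F y ≠ u := by
      rintro h
      apply hyne
      rw [← hy2.1, h]; rfl
    have := hFd (F y) hy2.2 (hy h3)
    rwa [hy2.1] at this
  intro h0
  have h1 : HasDerivAt (F ∘ G) (deriv F (G u) * deriv G u) u :=
    hFan.differentiableAt.hasDerivAt.comp u (han u hu).differentiableAt.hasDerivAt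
  have h2 : HasDerivAt (F ∘ G) 1 u := by
    refine (hasDerivAt_id u).congr_of_eventuallyEq ?_
    filter_upwards [hU.mem_nhds hu] with z hz
    simp [hFG z hz]
  have := h1.unique h2
  rw [h0] at this
  simp at this

lemma aux_inverse {U : Set ℂ} {G : ℂ → ℂ} (hU : IsOpen U) (hG : DifferentiableOn ℂ G U)
    (hinj : InjOn G U) : ∃ F : ℂ → ℂ, ∀ u ∈ U, F (G u) = u ∧ HasDerivAt F (deriv G u)⁻¹ (G u) := by
  obtain ⟨hop, hd⟩ := aux_inj_deriv_ne_zero hU hG hinj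
  set F := Function.invFunOn G U with hF
  have hFG : ∀ u ∈ U, F (G u) = u := fun u hu => hinj.leftInvOn_invFunOn hu
  refine ⟨F, fun u hu => ⟨hFG u hu, ?_⟩⟩
  have hFc : ContinuousAt F (G u) := by
    have : Tendsto F (map G (𝓝 u)) (𝓝 (F (G u))) := by
      rw [tendsto_map'_iff, hFG u hu]
      refine tendsto_id.congr' ?_
      filter_upwards [hU.mem_nhds hu] with z hz
      simp [hFG z hz]
    exact this.mono_left (hop u hu)
  have hright : ∀ᶠ y in 𝓝 (G u), G (F y) = y := by
    refine (hop u hu) ?_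
    rw [mem_map]
    filter_upwards [hU.mem_nhds hu] with z hz
    simp [hFG z hz]
  refine HasDerivAt.of_local_left_inverse hFc ?_ (hd u hu) hright
  rw [hFG u hu]
  exact (hG.differentiableAt (hU.mem_nhds hu)).hasDerivAt

lemma aux_log {f : ℂ → ℂ} {c : ℂ} {R : ℝ} (hf : DifferentiableOn ℂ f (Metric.ball c R))
    (h0 : ∀ z ∈ Metric.ball c R, f z ≠ 0) :
    ∃ l : ℂ → ℂ, (∀ z ∈ Metric.ball c R, HasDerivAt l (deriv f z / f z) z) ∧
      ∀ z ∈ Metric.ball c R, Complex.exp (l z) = f z := by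
  rcases le_or_gt R 0 with hR | hR
  · refine ⟨0, ?_, ?_⟩ <;> simp [Metric.ball_eq_empty.2 hR]
  have hd : DifferentiableOn ℂ (fun z => deriv f z / f z) (Metric.ball c R) :=
    (hf.deriv Metric.isOpen_ball).div hf h0
  obtain ⟨l, hl0, hl⟩ := hd.isExactOn_ball.with_val_at c (Complex.log (f c))
  refine ⟨l, hl, ?_⟩
  have hc : c ∈ Metric.ball c R := Metric.mem_ball_self hR
  have hq : ∀ z ∈ Metric.ball c R, HasDerivAt (fun z => Complex.exp (l z) / f z) 0 z := by
    intro z hz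
    have h1 := (hf.differentiableAt (Metric.isOpen_ball.mem_nhds hz)).hasDerivAt
    have := ((hl z hz).cexp).div h1 (h0 z hz)
    rw [mul_assoc, div_mul_cancel₀ _ (h0 z hz), sub_self, zero_div] at this
    exact this
  intro z hz
  have := (convex_ball c R).is_const_of_fderivWithin_eq_zero (𝕜 := ℂ)
    (f := fun z => Complex.exp (l z) / f z)
    (fun z hz => (hq z hz).differentiableAt.differentiableWithinAt)
    (fun x hx => by
      rw [fderivWithin_of_isOpen Metric.isOpen_ball hx]
      ext
      simp [(hq x hx).deriv]) hz hc
  simp only [hl0, Complex.exp_log (h0 c hc), div_self (h0 c hc)] at this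
  rwa [div_eq_one_iff_eq (h0 z hz)] at this

open Metric in
lemma aux_bloch_lt {f : ℂ → ℂ} {c : ℂ} {R R' : ℝ} (hf : DifferentiableOn ℂ f (ball c R))
    (hR' : 0 < R') (hRR : R' < R)
    (hno : ∀ w, ¬ ball w 4 ⊆ f '' ball c R) : ‖deriv f c‖ * R' ≤ 192 := by
  have hdd : DifferentiableOn ℂ (deriv f) (ball c R) := hf.deriv isOpen_ball
  have hsub : closedBall c R' ⊆ ball c R := closedBall_subset_ball hRR
  have hcont : ContinuousOn (fun z => ‖deriv f z‖ * (R' - ‖z - c‖)) (closedBall c R') :=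
    ((hdd.continuousOn.mono hsub).norm).mul (by fun_prop)
  obtain ⟨z1, hz1, hmax⟩ := (isCompact_closedBall c R').exists_isMaxOn
    ⟨c, mem_closedBall_self hR'.le⟩ hcont
  set A := ‖deriv f z1‖ with hA
  set t := R' - ‖z1 - c‖ with ht
  have hm : ‖deriv f c‖ * R' ≤ A * t := by
    simpa using hmax (mem_closedBall_self hR'.le)
  by_contra hcon
  push Not at hcon
  have hAt : 192 < A * t := lt_of_lt_of_le hcon hm
  have ht0 : 0 ≤ t := by
    rw [mem_closedBall, dist_eq_norm] at hz1; linarith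
  have htpos : 0 < t := by
    rcases ht0.eq_or_lt with h | h
    · rw [← h] at hAt; norm_num at hAt
    · exact h
  have hApos : 0 < A := by
    by_contra h
    have : A * t ≤ 0 := mul_nonpos_of_nonpos_of_nonneg (not_lt.1 h) ht0
    linarith
  have hb1 : ∀ z ∈ ball z1 (t/2), z ∈ closedBall c R' ∧ ‖deriv f z‖ ≤ 2 * A := by
    intro z hz
    rw [mem_ball, dist_eq_norm] at hz
    have h1 : ‖z - c‖ ≤ ‖z - z1‖ + ‖z1 - c‖ := by
      simpa using norm_add_le (z - z1) (z1 - c)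
    have h2 : z ∈ closedBall c R' := by
      rw [mem_closedBall, dist_eq_norm]; linarith
    refine ⟨h2, ?_⟩
    have h3 : ‖deriv f z‖ * (R' - ‖z - c‖) ≤ A * t := hmax h2
    have h4 : t / 2 ≤ R' - ‖z - c‖ := by linarith
    have h5 : ‖deriv f z‖ * (t/2) ≤ A * t :=
      (mul_le_mul_of_nonneg_left h4 (norm_nonneg _)).trans h3
    nlinarith
  have hsub2 : ball z1 (t/2) ⊆ ball c R := fun z hz => hsub (hb1 z hz).1
  have hschw : ∀ z ∈ ball z1 (t/2), ‖deriv f z - deriv f z1‖ ≤ 6 * A / t * ‖z - z1‖ := by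
    intro z hz
    have := Complex.dist_le_div_mul_dist_of_mapsTo_ball (f := deriv f) (c := z1) (R₁ := t/2)
      (R₂ := 3 * A) (hdd.mono hsub2) (fun w hw => by
        rw [mem_closedBall, dist_eq_norm]
        have := norm_sub_le (deriv f w) (deriv f z1)
        have := (hb1 w hw).2
        linarith) hz
    rw [dist_eq_norm, dist_eq_norm] at this
    convert this using 2
    field_simp
    norm_num
  have hs : closedBall z1 (t/12) ⊆ ball z1 (t/2) := closedBall_subset_ball (by linarith)
  have hmv : ∀ z ∈ closedBall z1 (t/12),
      ‖(f z - deriv f z1 * z) - (f z1 - deriv f z1 * z1)‖ ≤ A / 2 * ‖z - z1‖ := by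
    intro z hz
    refine (convex_closedBall z1 (t/12)).norm_image_sub_le_of_norm_hasDerivWithin_le
      (f := fun z => f z - deriv f z1 * z) (f' := fun z => deriv f z - deriv f z1 * 1) ?_ ?_
      (mem_closedBall_self (by positivity)) hz
    · intro x hx
      have h1 := (hf.differentiableAt (isOpen_ball.mem_nhds (hsub2 (hs hx)))).hasDerivAt
      exact (h1.sub ((hasDerivAt_id x).const_mul _)).hasDerivWithinAt
    · intro x hx
      rw [mul_one]
      refine (hschw x (hs hx)).trans ?_
      rw [mem_closedBall, dist_eq_norm] at hx
      have : 6 * A / t * ‖x - z1‖ ≤ 6 * A / t * (t/12) := by gcongr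
      refine this.trans (le_of_eq ?_)
      field_simp
      norm_num
  have hlow : ∀ z ∈ sphere z1 (t/12), A * t / 24 ≤ ‖f z - f z1‖ := by
    intro z hz
    have h1 := hmv z (sphere_subset_closedBall hz)
    rw [mem_sphere, dist_eq_norm] at hz
    have h2 : ‖deriv f z1 * (z - z1)‖ ≤ ‖f z - f z1‖ +
        ‖(f z - deriv f z1 * z) - (f z1 - deriv f z1 * z1)‖ := by
      have := norm_sub_le (f z - f z1) ((f z - deriv f z1 * z) - (f z1 - deriv f z1 * z1))
      have e : deriv f z1 * (z - z1) =
        (f z - f z1) - ((f z - deriv f z1 * z) - (f z1 - deriv f z1 * z1)) := by ring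
      rw [e]
      exact this
    rw [norm_mul, ← hA, hz] at h2
    rw [hz] at h1
    linarith
  have hdc : DiffContOnCl ℂ f (ball z1 (t/12)) :=
    (hf.mono (hs.trans hsub2)).diffContOnCl_ball subset_rfl
  have hfreq : ∃ᶠ z in 𝓝 z1, f z ≠ f z1 := by
    intro h
    have h0 : deriv f z1 = 0 := by
      have : f =ᶠ[𝓝 z1] fun _ => f z1 := by
        filter_upwards [h] with z hz
        simpa using hz
      rw [this.deriv_eq]; simp
    rw [h0, norm_zero] at hA
    linarith
  have hfin := hdc.ball_subset_image_closedBall (by positivity) hlow hfreq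
  refine hno (f z1) (Subset.trans (ball_subset_ball ?_) (hfin.trans (image_mono (hs.trans hsub2))))
  linarith

open Metric in
lemma aux_bloch {f : ℂ → ℂ} {c : ℂ} {R : ℝ} (hf : DifferentiableOn ℂ f (ball c R))
    (hno : ∀ w, ¬ ball w 4 ⊆ f '' ball c R) : ‖deriv f c‖ * R ≤ 192 := by
  refine le_of_forall_lt_imp_le_of_dense ?_
  intro x hx
  rcases (norm_nonneg (deriv f c)).eq_or_lt with h | h
  · rw [← h, zero_mul] at hx; linarith
  rcases le_or_gt x 0 with h0 | h0
  · linarith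
  have := aux_bloch_lt (R' := x / ‖deriv f c‖) hf (by positivity)
    (by rw [div_lt_iff₀ h]; linarith) hno
  rwa [mul_div_cancel₀ _ h.ne'] at this

open Metric in
lemma aux_koebe {F : ℂ → ℂ} {c : ℂ} {R : ℝ} (hF : DifferentiableOn ℂ F (ball c R)) (hR : 0 < R)
    (hinj : InjOn F (ball c R)) (h0 : ∀ z ∈ ball c R, F z ≠ 0) :
    ‖deriv F c‖ * R ≤ 192 * ‖F c‖ := by
  obtain ⟨l, hl, hle⟩ := aux_log hF h0
  have hc : c ∈ ball c R := mem_ball_self hR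
  have := aux_bloch (f := l) (c := c) (R := R)
    (fun z hz => (hl z hz).differentiableAt.differentiableWithinAt) (by
      intro w hw
      have hpi := Real.pi_lt_four
      have hpi0 := Real.pi_pos
      have e1 : w + Real.pi * Complex.I ∈ ball w 4 := by
        simp [abs_of_pos hpi0, hpi]
      have e2 : w - Real.pi * Complex.I ∈ ball w 4 := by
        simp [abs_of_pos hpi0, hpi]
      obtain ⟨a, ha, hla⟩ := hw e1
      obtain ⟨b, hb, hlb⟩ := hw e2
      have h1 : F a = F b := by
        rw [← hle a ha, ← hle b hb, hla, hlb, Complex.exp_add, Complex.exp_sub,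
          Complex.exp_pi_mul_I]
        simp [div_neg]
      have h2 := hinj ha hb h1
      rw [h2, hlb] at hla
      have h3 : (2 * Real.pi : ℂ) * Complex.I = 0 := by linear_combination -hla
      exact Complex.two_pi_I_ne_zero h3)
  rw [(hl c hc).deriv, norm_div] at this
  have hn : 0 < ‖F c‖ := norm_pos_iff.2 (h0 c hc)
  rw [div_mul_eq_mul_div, div_le_iff₀ hn] at this
  exact this

open Metric in
lemma aux_ell {F : ℂ → ℂ} {R : ℝ} (hR : 0 < R) (hF : DifferentiableOn ℂ F (ball 0 R))
    (hinj : InjOn F (ball 0 R)) (hF0 : F 0 = 0) :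
    ∃ l : ℂ → ℂ, DifferentiableOn ℂ l (ball 0 R) ∧
      (∀ z ∈ ball 0 R, F z = deriv F 0 * z * Complex.exp (l z)) ∧
      ∀ z, ‖z‖ ≤ R / 2 → ‖l z‖ ≤ 386 / R * ‖z‖ := by
  have h0m : (0 : ℂ) ∈ ball (0 : ℂ) R := mem_ball_self hR
  have hd0 : deriv F 0 ≠ 0 := (aux_inj_deriv_ne_zero isOpen_ball hF hinj).2 0 h0m
  have hFne : ∀ z ∈ ball (0 : ℂ) R, z ≠ 0 → F z ≠ 0 := by
    intro z hz hz0 h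
    exact hz0 (hinj hz h0m (by rw [h, hF0]))
  have hq : DifferentiableOn ℂ (dslope F 0) (ball 0 R) :=
    (Complex.differentiableOn_dslope (isOpen_ball.mem_nhds h0m)).2 hF
  have hqv : ∀ z, z ≠ 0 → dslope F 0 z = F z / z := by
    intro z hz
    rw [dslope_of_ne _ hz, slope_def_field, hF0, sub_zero, sub_zero]
  have hqne : ∀ z ∈ ball (0 : ℂ) R, dslope F 0 z ≠ 0 := by
    intro z hz
    by_cases h : z = 0
    · rw [h, dslope_same]; exact hd0
    · rw [hqv z h]; exact div_ne_zero (hFne z hz h) h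
  obtain ⟨l0, hl0, hl0e⟩ := aux_log hq hqne
  have hl0d : ∀ z ∈ ball (0 : ℂ) R, DifferentiableAt ℂ l0 z :=
    fun z hz => (hl0 z hz).differentiableAt
  have hld : DifferentiableOn ℂ l0 (ball 0 R) :=
    fun z hz => (hl0d z hz).differentiableWithinAt
  have hFe : ∀ z ∈ ball (0 : ℂ) R, F z = z * Complex.exp (l0 z) := by
    intro z hz
    rw [hl0e z hz]
    by_cases h : z = 0
    · rw [h, hF0, zero_mul]
    · rw [hqv z h, mul_div_cancel₀ _ h]
  have hbd : ∀ z, ‖z‖ ≤ R / 2 → ‖z * deriv l0 z‖ ≤ 193 := by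
    intro z hz
    by_cases h : z = 0
    · simp [h]
    have hzR : z ∈ ball (0 : ℂ) R := by simp; linarith
    have hzn : 0 < ‖z‖ := norm_pos_iff.2 h
    have hsub : ball z ‖z‖ ⊆ ball 0 R := by
      intro w hw
      rw [mem_ball, dist_eq_norm] at hw
      rw [mem_ball_zero_iff]
      have := norm_add_le (w - z) z
      rw [sub_add_cancel] at this
      linarith
    have hk := aux_koebe (hF.mono hsub) hzn (hinj.mono hsub) (fun w hw => by
      refine hFne w (hsub hw) ?_
      rintro rfl
      simp at hw)
    have hder : deriv F z = Complex.exp (l0 z) + z * (Complex.exp (l0 z) * deriv l0 z) := by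
      have h1 : HasDerivAt (fun z => z * Complex.exp (l0 z))
          (1 * Complex.exp (l0 z) + z * (Complex.exp (l0 z) * deriv l0 z)) z :=
        (hasDerivAt_id z).mul ((hl0d z hzR).hasDerivAt.cexp)
      have h2 : F =ᶠ[𝓝 z] fun z => z * Complex.exp (l0 z) := by
        filter_upwards [isOpen_ball.mem_nhds hzR] with w hw using hFe w hw
      rw [h2.deriv_eq, h1.deriv, one_mul]
    have hF1 : F z ≠ 0 := hFne z hzR h
    have e : z * deriv l0 z = deriv F z * z / F z - 1 := by
      rw [hder, hFe z hzR]
      field_simp [Complex.exp_ne_zero]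
      ring
    rw [e]
    have hn : ‖deriv F z * z / F z‖ ≤ 192 := by
      rw [norm_div, norm_mul, div_le_iff₀ (norm_pos_iff.2 hF1)]
      exact hk
    have := norm_sub_le (deriv F z * z / F z) 1
    rw [norm_one] at this
    linarith
  have hcb : closedBall (0 : ℂ) (R/2) ⊆ ball 0 R := closedBall_subset_ball (by linarith)
  have hder : ∀ z ∈ closedBall (0 : ℂ) (R/2), ‖deriv l0 z‖ ≤ 386 / R := by
    intro z hz
    have hdl : DifferentiableOn ℂ (deriv l0) (ball 0 R) := hld.deriv isOpen_ball
    refine Complex.norm_le_of_forall_mem_frontier_norm_le (U := ball (0 : ℂ) (R/2))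
      isBounded_ball (f := deriv l0) (hdl.diffContOnCl_ball hcb) ?_ ?_
    · intro w hw
      rw [frontier_ball _ (by positivity)] at hw
      have hw' : ‖w‖ = R / 2 := by simpa using hw
      have := hbd w hw'.le
      rw [norm_mul, hw'] at this
      rw [le_div_iff₀ hR]
      linarith
    · rwa [closure_ball _ (by positivity)]
  refine ⟨fun z => l0 z - l0 0, hld.sub_const _, ?_, ?_⟩
  · intro z hz
    rw [hFe z hz, Complex.exp_sub, hl0e 0 h0m, dslope_same]
    field_simp
  · intro z hz
    have := (convex_closedBall (0 : ℂ) (R/2)).norm_image_sub_le_of_norm_deriv_le (f := l0)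
      (fun x hx => hl0d x (hcb hx)) hder (mem_closedBall_self (by positivity))
      (show z ∈ closedBall (0 : ℂ) (R/2) by simpa using hz)
    simpa using this

open Metric in
lemma aux_lower {F : ℂ → ℂ} (hF : DifferentiableOn ℂ F (ball 0 1))
    (hinj : InjOn F (ball 0 1)) (hF0 : F 0 = 0) {z : ℂ} (hz : ‖z‖ < 1) :
    ‖deriv F 0‖ * ‖z‖ ≤ 4 * Real.exp 193 * ‖F z‖ := by
  obtain ⟨l, hl, hle, hlb⟩ := aux_ell one_pos hF hinj hF0
  have hE : 0 < Real.exp 193 := Real.exp_pos _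
  have h1 : ∀ w : ℂ, ‖w‖ ≤ 1 / 2 → ‖deriv F 0‖ * ‖w‖ ≤ Real.exp 193 * ‖F w‖ := by
    intro w hw
    rw [hle w (by simp; linarith), norm_mul, norm_mul, Complex.norm_exp]
    have h2 : -193 ≤ (l w).re := by
      have := hlb w hw
      have h3 := Complex.abs_re_le_norm (l w)
      have := abs_le.1 h3
      linarith
    have h4 : 1 ≤ Real.exp 193 * Real.exp (l w).re := by
      rw [← Real.exp_add]
      exact Real.one_le_exp (by linarith)
    have h5 : 0 ≤ ‖deriv F 0‖ * ‖w‖ := by positivity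
    nlinarith
  rcases le_or_gt ‖z‖ (1/2) with h | h
  · have := h1 z h
    have : 0 ≤ Real.exp 193 * ‖F z‖ := by positivity
    linarith
  have hcb : closedBall (0 : ℂ) (1/2) ⊆ ball 0 1 := closedBall_subset_ball (by norm_num)
  have hd0 : deriv F 0 ≠ 0 :=
    (aux_inj_deriv_ne_zero isOpen_ball hF hinj).2 0 (mem_ball_self one_pos)
  have hdp : 0 < ‖deriv F 0‖ := norm_pos_iff.2 hd0
  have hb := (hF.diffContOnCl_ball hcb).ball_subset_image_closedBall
    (ε := ‖deriv F 0‖ / (2 * Real.exp 193)) (by norm_num) (by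
      intro w hw
      have hw' : ‖w‖ = 1 / 2 := by simpa using hw
      have := h1 w hw'.le
      rw [hw'] at this
      rw [hF0, sub_zero, div_le_iff₀ (by positivity)]
      linarith) (by
      intro h
      have : F =ᶠ[𝓝 0] fun _ => F 0 := by
        filter_upwards [h] with z hz
        simpa using hz
      apply hd0
      rw [this.deriv_eq]; simp)
  by_contra hcon
  push Not at hcon
  have hm : F z ∈ ball (F 0) (‖deriv F 0‖ / (2 * Real.exp 193) / 2) := by
    rw [hF0, mem_ball_zero_iff, div_div, lt_div_iff₀ (by positivity)]
    have : ‖deriv F 0‖ * ‖z‖ ≤ ‖deriv F 0‖ * 1 := by gcongr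
    linarith
  obtain ⟨w, hw, hwz⟩ := hb hm
  have := hinj (hcb hw) (by simpa using hz) hwz
  rw [this] at hw
  have : ‖z‖ ≤ 1 / 2 := by simpa using hw
  linarith

open Metric in
lemma aux_mean {h : ℂ → ℂ} {e M D : ℝ} (he : 0 < e) (he1 : e < 1)
    (hd : ∀ z : ℂ, e ≤ ‖z‖ → ‖z‖ < 1 → DifferentiableAt ℂ h z)
    (hM : ∀ z : ℂ, ‖z‖ = e → ‖h z‖ ≤ M)
    (hlim : ∀ k > 0, ∃ p < 1, ∀ z : ℂ, p < ‖z‖ → e ≤ ‖z‖ → ‖z‖ < 1 → |(h z).re + D| ≤ k) :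
    |D| ≤ M := by
  refine le_of_forall_pos_le_add ?_
  intro k hk
  obtain ⟨p, hp1, hp⟩ := hlim k hk
  obtain ⟨q, hq, hq1⟩ := exists_between (max_lt hp1 he1)
  have hpq : p < q := lt_of_le_of_lt (le_max_left _ _) hq
  have heq : e < q := lt_of_le_of_lt (le_max_right _ _) hq
  have hq0 : 0 < q := he.trans heq
  have hcont : ContinuousOn h (closedBall 0 q \ ball 0 e) := by
    intro z hz
    simp only [Set.mem_sdiff, mem_closedBall, mem_ball, dist_zero_right, not_lt] at hz
    exact (hd z hz.2 (by linarith)).continuousAt.continuousWithinAt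
  have hcirc := Complex.circleIntegral_sub_center_inv_smul_eq_of_differentiable_on_annulus_off_countable
    (c := 0) he heq.le (f := h) countable_empty hcont (by
      intro z hz
      simp only [Set.mem_sdiff, mem_closedBall, mem_ball, dist_zero_right, not_le] at hz
      exact hd z (by linarith) (by linarith))
  have havg : Real.circleAverage h 0 q = Real.circleAverage h 0 e := by
    rw [Real.circleAverage_eq_circleIntegral hq0.ne', Real.circleAverage_eq_circleIntegral he.ne',
      hcirc]
  have hci : ∀ s, e ≤ s → s ≤ q → CircleIntegrable h 0 s := by
    intro s h1 h2
    refine (hcont.mono ?_).circleIntegrable (by linarith)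
    intro z hz
    have : ‖z‖ = s := by simpa using hz
    simp [this, h1, h2]
  have hcir : ∀ s, e ≤ s → s ≤ q → CircleIntegrable (fun z => (h z).re) 0 s := by
    intro s h1 h2
    refine (Complex.continuous_re.comp_continuousOn (hcont.mono ?_)).circleIntegrable
      (by linarith)
    intro z hz
    have : ‖z‖ = s := by simpa using hz
    simp [this, h1, h2]
  have hre : ∀ s, e ≤ s → s ≤ q →
      Real.circleAverage (fun z => (h z).re) 0 s = (Real.circleAverage h 0 s).re := by
    intro s h1 h2
    exact Complex.reCLM.circleAverage_comp_comm (hci s h1 h2)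
  have h1 : ∀ s c B, e ≤ s → s ≤ q → (∀ z : ℂ, ‖z‖ = s → |(h z).re + c| ≤ B) →
      |Real.circleAverage (fun z => (h z).re) 0 s + c| ≤ B := by
    intro s c B h1 h2 h3
    have hs : |s| = s := abs_of_pos (by linarith)
    rw [abs_le]
    constructor
    · have := Real.circleAverage_mono (f₁ := fun _ => -B - c) (f₂ := fun z => (h z).re)
        (c := 0) (R := s) (circleIntegrable_const _ _ _) (hcir s h1 h2) (by
          intro z hz
          have := (abs_le.1 (h3 z (by simpa [hs] using hz))).1
          linarith)
      rw [Real.circleAverage_const] at this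
      linarith
    · have := Real.circleAverage_mono (f₂ := fun _ => B - c) (f₁ := fun z => (h z).re)
        (c := 0) (R := s) (hcir s h1 h2) (circleIntegrable_const _ _ _) (by
          intro z hz
          have := (abs_le.1 (h3 z (by simpa [hs] using hz))).2
          linarith)
      rw [Real.circleAverage_const] at this
      linarith
  have a1 := h1 q D k heq.le le_rfl (fun z hz => hp z (by linarith) (by linarith) (by linarith))
  have a2 := h1 e 0 M le_rfl heq.le (fun z hz => by
    rw [add_zero]
    exact (Complex.abs_re_le_norm _).trans (hM z hz))
  rw [hre q heq.le le_rfl, havg] at a1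
  rw [hre e le_rfl heq.le, add_zero] at a2
  rw [abs_le] at *
  constructor <;> linarith

open Metric in
lemma aux_struct {K : Set ℂ} {g : ℂ → ℂ} {cap : ℝ} (hK : IsCompact K) (h0 : (0 : ℂ) ∈ K)
    (hg : IsWholePlaneCapacityMap K g cap) :
    ∃ F G : ℂ → ℂ, DifferentiableOn ℂ F (ball 0 1) ∧ InjOn F (ball 0 1) ∧ F 0 = 0 ∧
      deriv F 0 = ((Real.exp cap : ℝ) : ℂ)⁻¹ ∧
      (∀ z : ℂ, ‖z‖ < 1 → z ≠ 0 → F z ≠ 0 ∧ (F z)⁻¹ ∉ K ∧ G (F z) = z) ∧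
      (∀ u : ℂ, u ≠ 0 → u⁻¹ ∉ K →
        DifferentiableAt ℂ G u ∧ ‖G u‖ < 1 ∧ G u ≠ 0 ∧ F (G u) = u) ∧
      (∀ s > 0, K ⊆ closedBall 0 s → Real.exp cap ≤ s) ∧
      K ⊆ closedBall 0 (192 * Real.exp cap) := by
  obtain ⟨hgd, hginj, hgim, hglim⟩ := hg
  set r := Real.exp cap with hr
  have hrpos : 0 < r := Real.exp_pos _
  have hKo : IsOpen Kᶜ := hK.isClosed.isOpen_compl
  set V : Set ℂ := {u | u⁻¹ ∉ K} with hV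
  have hVne : ∀ u ∈ V, u ≠ 0 := by
    rintro u hu rfl
    apply hu
    simpa using h0
  have hVo : IsOpen V := by
    have h1 : IsOpen (({0} : Set ℂ)ᶜ ∩ (fun u => u⁻¹) ⁻¹' Kᶜ) :=
      continuousOn_inv₀.isOpen_inter_preimage isOpen_compl_singleton hKo
    convert h1 using 1
    ext u
    constructor
    · intro hu; exact ⟨hVne u hu, hu⟩
    · intro hu; exact hu.2
  have hballV : ∀ s > 0, K ⊆ closedBall 0 s → ball (0 : ℂ) (1 / s) ⊆ insert 0 V := by
    intro s hs hKs u hu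
    by_cases hu0 : u = 0
    · left; exact hu0
    right
    intro huK
    have h1 : ‖u⁻¹‖ ≤ s := by simpa using hKs huK
    have h2 : ‖u‖ < 1 / s := by simpa using hu
    have h3 : 0 < ‖u‖ := norm_pos_iff.2 hu0
    rw [norm_inv] at h1
    rw [lt_div_iff₀ hs] at h2
    rw [inv_le_iff_one_le_mul₀ h3] at h1
    linarith
  set U : Set ℂ := insert 0 V with hU
  have hUo : IsOpen U := by
    obtain ⟨s, hs, hKs⟩ := hK.isBounded.subset_closedBall_lt 0 0
    have : U = ball 0 (1/s) ∪ V := by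
      apply Subset.antisymm
      · rintro u (hu | hu)
        · left; rw [hu]; exact mem_ball_self (by positivity)
        · right; exact hu
      · rintro u (hu | hu)
        · exact hballV s hs hKs hu
        · right; exact hu
    rw [this]
    exact isOpen_ball.union hVo
  have h0U : (0 : ℂ) ∈ U := mem_insert _ _
  set G : ℂ → ℂ := Function.update (fun u => (g u⁻¹)⁻¹) 0 0 with hG
  have hG0 : G 0 = 0 := by simp [hG]
  have hGv : ∀ u, u ≠ 0 → G u = (g u⁻¹)⁻¹ := fun u hu => by simp [hG, hu]
  have hgn : ∀ z, z ∉ K → 1 < ‖g z‖ := by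
    intro z hz
    have : g z ∈ g '' Kᶜ := mem_image_of_mem g hz
    rw [hgim] at this
    exact this
  have hgne : ∀ z, z ∉ K → g z ≠ 0 := by
    intro z hz h
    have := hgn z hz
    rw [h, norm_zero] at this
    linarith
  have hGd0 : HasDerivAt G (r : ℂ) 0 := by
    rw [hasDerivAt_iff_tendsto_slope]
    have h1 := hglim.comp (tendsto_inv₀_nhdsNE_zero (α := ℂ))
    refine h1.congr' ?_
    filter_upwards [self_mem_nhdsWithin] with u hu
    have hu' : u ≠ 0 := hu
    simp only [Function.comp]
    rw [slope_def_field, hG0, sub_zero, sub_zero, hGv u hu']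
    rw [div_eq_mul_inv, div_eq_mul_inv, mul_comm]
  have hGdV : ∀ u ∈ V, DifferentiableAt ℂ G u := by
    intro u hu
    have hu0 := hVne u hu
    have h1 : DifferentiableAt ℂ g u⁻¹ := hgd.differentiableAt (hKo.mem_nhds hu)
    have h2 : DifferentiableAt ℂ (fun u => (g u⁻¹)⁻¹) u :=
      (h1.comp u (differentiableAt_inv hu0)).inv (hgne _ hu)
    refine h2.congr_of_eventuallyEq ?_
    filter_upwards [isOpen_ne.mem_nhds hu0] with w hw
    exact hGv w hw
  have hGd : DifferentiableOn ℂ G U := by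
    rintro u (hu | hu)
    · rw [hu]; exact hGd0.differentiableAt.differentiableWithinAt
    · exact (hGdV u hu).differentiableWithinAt
  have hGVne : ∀ u ∈ V, G u ≠ 0 := by
    intro u hu
    rw [hGv u (hVne u hu)]
    exact inv_ne_zero (hgne _ hu)
  have hGVn : ∀ u ∈ V, ‖G u‖ < 1 := by
    intro u hu
    rw [hGv u (hVne u hu), norm_inv]
    exact inv_lt_one_of_one_lt₀ (hgn _ hu)
  have hGinj : InjOn G U := by
    rintro u (hu | hu) v (hv | hv) huv
    · rw [hu, hv]
    · exact absurd (by rw [← huv, hu, hG0]) (hGVne v hv)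
    · exact absurd (by rw [huv, hv, hG0]) (hGVne u hu)
    · rw [hGv u (hVne u hu), hGv v (hVne v hv)] at huv
      exact inv_injective (hginj hu hv (inv_injective huv))
  have hsurj : ∀ z : ℂ, ‖z‖ < 1 → z ≠ 0 → ∃ u ∈ V, G u = z := by
    intro z hz hz0
    have : z⁻¹ ∈ g '' Kᶜ := by
      rw [hgim]
      simp only [mem_ofPred_eq, norm_inv]
      exact (one_lt_inv₀ (norm_pos_iff.2 hz0)).2 hz
    obtain ⟨w, hw, hwz⟩ := this
    have hwV : w⁻¹ ∈ V := by simpa [hV] using hw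
    refine ⟨w⁻¹, hwV, ?_⟩
    rw [hGv _ (hVne _ hwV), inv_inv, hwz, inv_inv]
  obtain ⟨F, hF⟩ := aux_inverse hUo hGd hGinj
  have hF0 : F 0 = 0 := by
    have := (hF 0 h0U).1
    rwa [hG0] at this
  have hFd0 : HasDerivAt F (r : ℂ)⁻¹ 0 := by
    have := (hF 0 h0U).2
    rwa [hG0, hGd0.deriv] at this
  have hFb : ∀ z ∈ ball (0 : ℂ) 1, ∃ u ∈ U, G u = z := by
    intro z hz
    by_cases hz0 : z = 0
    · exact ⟨0, h0U, by rw [hG0, hz0]⟩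
    · obtain ⟨u, hu, h⟩ := hsurj z (by simpa using hz) hz0
      exact ⟨u, Or.inr hu, h⟩
  have hFdiff : DifferentiableOn ℂ F (ball 0 1) := by
    intro z hz
    obtain ⟨u, hu, rfl⟩ := hFb z hz
    exact (hF u hu).2.differentiableAt.differentiableWithinAt
  have hFinj : InjOn F (ball 0 1) := by
    intro z hz w hw hzw
    obtain ⟨u, hu, rfl⟩ := hFb z hz
    obtain ⟨v, hv, rfl⟩ := hFb w hw
    rw [(hF u hu).1, (hF v hv).1] at hzw
    rw [hzw]
  have hFz : ∀ z : ℂ, ‖z‖ < 1 → z ≠ 0 → F z ≠ 0 ∧ (F z)⁻¹ ∉ K ∧ G (F z) = z := by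
    intro z hz hz0
    obtain ⟨u, hu, rfl⟩ := hsurj z hz hz0
    rw [(hF u (Or.inr hu)).1]
    exact ⟨hVne u hu, hu, rfl⟩
  refine ⟨F, G, hFdiff, hFinj, hF0, hFd0.deriv, hFz, ?_, ?_, ?_⟩
  · intro u hu0 hu
    exact ⟨hGdV u hu, hGVn u hu, hGVne u hu, (hF u (Or.inr hu)).1⟩
  · intro s hs hKs
    have h1 := Complex.norm_deriv_le_div_of_mapsTo_ball (f := G) (c := 0) (R₁ := 1/s) (R₂ := 1)
      (hGd.mono (hballV s hs hKs)) (by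
        intro u hu
        rw [hG0, mem_closedBall_zero_iff]
        rcases hballV s hs hKs hu with h | h
        · rw [h, hG0]; simp
        · exact (hGVn u h).le) (by positivity)
    rw [hGd0.deriv] at h1
    simpa [abs_of_pos hrpos] using h1
  · intro z hz
    rw [mem_closedBall_zero_iff]
    by_cases hz0 : z = 0
    · rw [hz0]; simp; positivity
    have hk := aux_koebe (F := fun u => F u - z⁻¹) (c := 0) (R := 1) (hFdiff.sub_const _) one_pos
      (fun a ha b hb hab => hFinj ha hb (by simpa using hab)) (by
        intro u hu h
        have h1 : F u = z⁻¹ := sub_eq_zero.1 h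
        by_cases hu0 : u = 0
        · rw [hu0, hF0] at h1
          exact inv_ne_zero hz0 h1.symm
        · apply (hFz u (by simpa using hu) hu0).2.1
          rwa [h1, inv_inv])
    rw [deriv_sub_const, hFd0.deriv, hF0, zero_sub, norm_neg, norm_inv, norm_inv, mul_one] at hk
    rw [Complex.norm_real, Real.norm_of_nonneg hrpos.le] at hk
    have hzn : 0 < ‖z‖ := norm_pos_iff.2 hz0
    field_simp at hk
    linarith

open Metric in
lemma aux_bdry {K K' B : Set ℂ} {F G F' W V : ℂ → ℂ} {e : ℝ} (hB : IsCompact B)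
    (h0K : (0 : ℂ) ∈ K) (hWK : ∀ z ∈ K, W z ∈ K') (hWc : ContinuousOn W B)
    (hG : ∀ u : ℂ, u ≠ 0 → u⁻¹ ∉ K → ContinuousAt G u ∧ ‖G u‖ < 1)
    (hGF : ∀ z : ℂ, e ≤ ‖z‖ → ‖z‖ < 1 → F z ≠ 0 ∧ G (F z) = z ∧ (F z)⁻¹ ∈ B ∧
      W (F z)⁻¹ ≠ 0 ∧ F' (V z) = (W (F z)⁻¹)⁻¹)
    (hF'c : ContinuousOn F' (ball 0 1)) (hF'0 : F' 0 = 0)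
    (hF'K : ∀ z : ℂ, ‖z‖ < 1 → z ≠ 0 → (F' z)⁻¹ ∉ K') {η : ℝ} (hη : η < 1) :
    ∃ p < 1, ∀ z : ℂ, p < ‖z‖ → e ≤ ‖z‖ → ‖z‖ < 1 → η < ‖V z‖ := by
  by_contra hcon
  push Not at hcon
  have hp : ∀ n : ℕ, (1 : ℝ) - 1 / ((n : ℝ) + 1) < 1 := fun n => by
    have : (0 : ℝ) < 1 / ((n : ℝ) + 1) := Nat.one_div_pos_of_nat
    linarith
  choose ζ h1 h2 h3 h4 using fun n : ℕ => hcon _ (hp n)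
  have hcomp : IsCompact (B ×ˢ closedBall (0 : ℂ) η) := hB.prod (isCompact_closedBall 0 η)
  have hmem : ∀ n, (((F (ζ n))⁻¹, V (ζ n)) : ℂ × ℂ) ∈ B ×ˢ closedBall (0 : ℂ) η := by
    intro n
    exact ⟨(hGF _ (h2 n) (h3 n)).2.2.1, by simpa using h4 n⟩
  obtain ⟨⟨zs, vs⟩, hs, φ, hφ, hlim⟩ := hcomp.tendsto_subseq hmem
  obtain ⟨hzs, hvs⟩ := hs
  simp only at hzs hvs
  have hl1 : Tendsto (fun n => (F (ζ (φ n)))⁻¹) atTop (𝓝 zs) :=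
    (continuous_fst.tendsto _).comp hlim
  have hl2 : Tendsto (fun n => V (ζ (φ n))) atTop (𝓝 vs) :=
    (continuous_snd.tendsto _).comp hlim
  have hvs1 : ‖vs‖ < 1 := by
    have : ‖vs‖ ≤ η := by simpa using hvs
    linarith
  have hζ1 : Tendsto (fun n => ‖ζ n‖) atTop (𝓝 1) := by
    refine tendsto_of_tendsto_of_tendsto_of_le_of_le (g := fun n : ℕ => (1 : ℝ) - 1 / ((n : ℝ) + 1))
      (h := fun _ => 1) ?_ tendsto_const_nhds (fun n => (h1 n).le) (fun n => (h3 n).le)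
    simpa using (tendsto_const_nhds (x := (1 : ℝ))).sub
      (tendsto_one_div_add_atTop_nhds_zero_nat (𝕜 := ℝ))
  have hzK : zs ∈ K := by
    by_contra hzK
    have hz0 : zs ≠ 0 := fun h => hzK (h ▸ h0K)
    obtain ⟨hGc, hGn⟩ := hG zs⁻¹ (inv_ne_zero hz0) (by simpa using hzK)
    have h5 : Tendsto (fun n => F (ζ (φ n))) atTop (𝓝 zs⁻¹) := by
      simpa using hl1.inv₀ hz0
    have h6 := (hGc.tendsto.comp h5).norm
    have h7 : Tendsto (fun n => ‖ζ (φ n)‖) atTop (𝓝 1) := hζ1.comp hφ.tendsto_atTop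
    have h8 : (fun n => ‖ζ (φ n)‖) = fun n => ‖(G ∘ fun n => F (ζ (φ n))) n‖ := by
      funext n
      simp [(hGF _ (h2 (φ n)) (h3 (φ n))).2.1]
    rw [h8] at h7
    have := tendsto_nhds_unique h6 h7
    linarith
  have hW1 : Tendsto (fun n => W (F (ζ (φ n)))⁻¹) atTop (𝓝 (W zs)) := by
    refine (hWc zs hzs).tendsto.comp (tendsto_nhdsWithin_iff.2 ⟨hl1, ?_⟩)
    exact Eventually.of_forall fun n => (hGF _ (h2 (φ n)) (h3 (φ n))).2.2.1
  have hF1 : Tendsto (fun n => F' (V (ζ (φ n)))) atTop (𝓝 (F' vs)) :=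
    ((hF'c.continuousAt (isOpen_ball.mem_nhds (by simpa using hvs1))).tendsto).comp hl2
  have hprod := hW1.mul hF1
  have hone : (fun n => W (F (ζ (φ n)))⁻¹ * F' (V (ζ (φ n)))) = fun _ => (1 : ℂ) := by
    funext n
    obtain ⟨-, -, -, ha, hb⟩ := hGF _ (h2 (φ n)) (h3 (φ n))
    rw [hb, mul_inv_cancel₀ ha]
  rw [hone] at hprod
  have h9 : W zs * F' vs = 1 := tendsto_nhds_unique hprod tendsto_const_nhds
  have hv0 : vs ≠ 0 := by
    rintro rfl
    rw [hF'0, mul_zero] at h9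
    exact zero_ne_one h9
  apply hF'K vs hvs1 hv0
  rw [← eq_inv_of_mul_eq_one_left h9]
  exact hWK zs hzK

open Metric in
lemma aux_main (Ω : Set ℂ) (W : ℂ → ℂ) (hW : DifferentiableOn ℂ W Ω) (hWinj : InjOn W Ω)
    (hW0 : W 0 = 0) {δ : ℝ} (hδ : 0 < δ) (hδΩ : ball (0 : ℂ) δ ⊆ Ω) {a : ℂ} (ha : a ≠ 0)
    {lam : ℂ → ℂ} (hlam : DifferentiableOn ℂ lam (ball 0 δ))
    (hlamW : ∀ z ∈ ball (0 : ℂ) δ, W z = a * z * Complex.exp (lam z))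
    (hlamb : ∀ z, ‖z‖ ≤ δ / 2 → ‖lam z‖ ≤ 386 / δ * ‖z‖)
    {E : ℝ} (hE : E = Real.exp 193)
    {K : Set ℂ} {gK gWK : ℂ → ℂ} {capK capWK : ℝ} (hKc : IsCompact K) (h0K : (0 : ℂ) ∈ K)
    (hKΩ : K ⊆ Ω) (hgK : IsWholePlaneCapacityMap K gK capK) (hKc' : IsCompact (W '' K))
    (hgWK : IsWholePlaneCapacityMap (W '' K) gWK capWK)
    {e : ℝ} (he : e = Real.exp (capK / 2)) (he1 : e ≤ 1 / 2) (he2 : 4 * E * e ≤ δ / 2)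
    (he3 : 192 * e ≤ δ / 2) (he4 : 768 * E ^ 4 * e ≤ 1 / 2) :
    |capWK - capK - Real.log ‖a‖| ≤ (386 + 1544 * E / δ + 386 * 768 * E ^ 4) * e := by
  have h0K' : (0 : ℂ) ∈ W '' K := ⟨0, h0K, hW0⟩
  obtain ⟨F, G, hFd, hFi, hF0, hFd0, hFz, hGu, -, hKb⟩ := aux_struct hKc h0K hgK
  obtain ⟨F', G', hFd', hFi', hF0', hFd0', hFz', hGu', hrb', -⟩ := aux_struct hKc' h0K' hgWK
  set r := Real.exp capK with hr
  set r' := Real.exp capWK with hr'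
  have hrp : 0 < r := Real.exp_pos _
  have hrp' : 0 < r' := Real.exp_pos _
  have hEp : 0 < E := hE ▸ Real.exp_pos _
  have hep : 0 < e := he ▸ Real.exp_pos _
  have hre : r = e * e := by rw [he, hr, ← Real.exp_add]; congr 1; ring
  have hap : 0 < ‖a‖ := norm_pos_iff.2 ha
  obtain ⟨l, hl, hle, hlb⟩ := aux_ell one_pos hFd hFi hF0
  obtain ⟨l', hl', hle', hlb'⟩ := aux_ell one_pos hFd' hFi' hF0'
  rw [hFd0] at hle
  rw [hFd0'] at hle'
  have hnr : ‖((r : ℝ) : ℂ)⁻¹‖ = r⁻¹ := by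
    rw [norm_inv, Complex.norm_real, Real.norm_of_nonneg hrp.le]
  have hnr' : ‖((r' : ℝ) : ℂ)⁻¹‖ = r'⁻¹ := by
    rw [norm_inv, Complex.norm_real, Real.norm_of_nonneg hrp'.le]
  have hlow : ∀ z : ℂ, ‖z‖ < 1 → ‖z‖ ≤ 4 * E * r * ‖F z‖ := by
    intro z hz
    have := aux_lower hFd hFi hF0 hz
    rw [hFd0, hnr, ← hE, inv_mul_le_iff₀ hrp] at this
    linarith
  have hlow' : ∀ z : ℂ, ‖z‖ < 1 → ‖z‖ ≤ 4 * E * r' * ‖F' z‖ := by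
    intro z hz
    have := aux_lower hFd' hFi' hF0' hz
    rw [hFd0', hnr', ← hE, inv_mul_le_iff₀ hrp'] at this
    linarith
  have hexp : ∀ z : ℂ, ‖z‖ ≤ δ / 2 → Real.exp (lam z).re ≤ E ∧ 1 ≤ E * Real.exp (lam z).re := by
    intro z hz
    have h1 : ‖lam z‖ ≤ 193 := by
      refine (hlamb z hz).trans ?_
      have : 386 / δ * ‖z‖ ≤ 386 / δ * (δ / 2) := by gcongr
      refine this.trans (le_of_eq ?_)
      field_simp
      norm_num
    have h2 := abs_le.1 ((Complex.abs_re_le_norm _).trans h1)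
    constructor
    · rw [hE]; exact Real.exp_le_exp.2 h2.2
    · rw [hE, ← Real.exp_add]; exact Real.one_le_exp (by linarith)
  have hWup : ∀ z : ℂ, ‖z‖ ≤ δ / 2 → ‖W z‖ ≤ ‖a‖ * ‖z‖ * E ∧ ‖a‖ * ‖z‖ ≤ E * ‖W z‖ := by
    intro z hz
    obtain ⟨h1, h2⟩ := hexp z hz
    rw [hlamW z (by simp; linarith), norm_mul, norm_mul, Complex.norm_exp]
    constructor
    · gcongr
    · have : 0 ≤ ‖a‖ * ‖z‖ := by positivity
      nlinarith
  have hr192 : 192 * r ≤ δ / 2 := by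
    rw [hre]; nlinarith
  have hr'r : r' ≤ 192 * E * ‖a‖ * r := by
    apply hrb' _ (by positivity)
    rintro _ ⟨z, hz, rfl⟩
    have hz1 : ‖z‖ ≤ 192 * r := by simpa using hKb hz
    rw [mem_closedBall_zero_iff]
    refine (hWup z (hz1.trans hr192)).1.trans ?_
    have : ‖a‖ * ‖z‖ * E ≤ ‖a‖ * (192 * r) * E := by gcongr
    linarith
  have hann : ∀ z : ℂ, e ≤ ‖z‖ → ‖z‖ < 1 → z ≠ 0 ∧ F z ≠ 0 ∧ (F z)⁻¹ ∉ K ∧ G (F z) = z ∧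
      ‖(F z)⁻¹‖ ≤ 4 * E * e ∧ W (F z)⁻¹ ≠ 0 ∧ W (F z)⁻¹ ∉ W '' K := by
    intro z hz hz1
    have hz0 : z ≠ 0 := norm_pos_iff.1 (hep.trans_le hz)
    obtain ⟨h1, h2, h3⟩ := hFz z hz1 hz0
    have h4 : ‖(F z)⁻¹‖ ≤ 4 * E * e := by
      have hFp : 0 < ‖F z‖ := norm_pos_iff.2 h1
      have := hz.trans (hlow z hz1)
      rw [hre] at this
      rw [norm_inv, inv_le_iff_one_le_mul₀ hFp]
      by_contra hcon
      push Not at hcon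
      nlinarith
    have h5 : (F z)⁻¹ ∈ Ω := hδΩ (by rw [mem_ball_zero_iff]; linarith)
    have h6 : W (F z)⁻¹ ∉ W '' K := by
      rintro ⟨w, hw, hwz⟩
      exact h2 (hWinj (hKΩ hw) h5 hwz ▸ hw)
    exact ⟨hz0, h1, h2, h3, h4, fun h => h6 (h ▸ h0K'), h6⟩
  set V : ℂ → ℂ := fun z => G' (W (F z)⁻¹)⁻¹ with hV
  have hVp : ∀ z : ℂ, e ≤ ‖z‖ → ‖z‖ < 1 → DifferentiableAt ℂ G' (W (F z)⁻¹)⁻¹ ∧ ‖V z‖ < 1 ∧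
      V z ≠ 0 ∧ F' (V z) = (W (F z)⁻¹)⁻¹ := by
    intro z hz hz1
    obtain ⟨-, -, -, -, -, h1, h2⟩ := hann z hz hz1
    exact hGu' _ (inv_ne_zero h1) (by rwa [inv_inv])
  set h : ℂ → ℂ := fun z => l z - lam (F z)⁻¹ - l' (V z) with hh
  have hkey : ∀ z : ℂ, e ≤ ‖z‖ → ‖z‖ < 1 → V z = (r' / (a * r)) * z * Complex.exp (h z) := by
    intro z hz hz1
    obtain ⟨hz0, h1, -, -, h4, h5, -⟩ := hann z hz hz1
    obtain ⟨-, hV1, hV0, hV2⟩ := hVp z hz hz1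
    have e1 := hle z (by simpa using hz1)
    have e2 := hle' (V z) (by simpa using hV1)
    have e3 := hlamW (F z)⁻¹ (by rw [mem_ball_zero_iff]; linarith)
    rw [hV2, e3] at e2
    have hrc : (r : ℂ) ≠ 0 := by exact_mod_cast hrp.ne'
    have hrc' : (r' : ℂ) ≠ 0 := by exact_mod_cast hrp'.ne'
    simp only [hh]
    rw [Complex.exp_sub, Complex.exp_sub]
    have n1 := Complex.exp_ne_zero (lam (F z)⁻¹)
    have n2 := Complex.exp_ne_zero (l' (V z))
    have n3 := Complex.exp_ne_zero (l z)
    generalize Complex.exp (lam (F z)⁻¹) = x1 at *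
    generalize Complex.exp (l' (V z)) = x2 at *
    generalize Complex.exp (l z) = x3 at *
    rw [e1] at e2
    field_simp at e2 ⊢
    linear_combination -e2
  have hD : ∀ z : ℂ, e ≤ ‖z‖ → ‖z‖ < 1 →
      (h z).re + (capWK - capK - Real.log ‖a‖) = Real.log ‖V z‖ - Real.log ‖z‖ := by
    intro z hz hz1
    have hz0 := (hann z hz hz1).1
    have hzp : 0 < ‖z‖ := norm_pos_iff.2 hz0
    rw [hkey z hz hz1, norm_mul, norm_mul, norm_div, norm_mul, Complex.norm_exp,
      Complex.norm_real, Complex.norm_real, Real.norm_of_nonneg hrp.le,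
      Real.norm_of_nonneg hrp'.le, Real.log_mul (by positivity) (by positivity),
      Real.log_mul (by positivity) (by positivity), Real.log_div (by positivity) (by positivity),
      Real.log_mul (by positivity) (by positivity), Real.log_exp, hr, Real.log_exp,
      Real.log_exp]
    ring
  refine aux_mean (h := h) hep (by linarith) ?_ ?_ ?_
  · intro z hz hz1
    obtain ⟨hz0, h1, -, -, h4, h5, -⟩ := hann z hz hz1
    obtain ⟨hG1, hV1, -, -⟩ := hVp z hz hz1
    have hzb : (F z)⁻¹ ∈ ball (0 : ℂ) δ := by rw [mem_ball_zero_iff]; linarith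
    have d1 : DifferentiableAt ℂ l z := hl.differentiableAt (isOpen_ball.mem_nhds (by simpa))
    have d2 : DifferentiableAt ℂ (fun z => (F z)⁻¹) z :=
      (hFd.differentiableAt (isOpen_ball.mem_nhds (by simpa))).inv h1
    have d3 : DifferentiableAt ℂ (fun z => lam (F z)⁻¹) z :=
      DifferentiableAt.comp (g := lam) z (hlam.differentiableAt (isOpen_ball.mem_nhds hzb)) d2
    have d4 : DifferentiableAt ℂ (fun z => (W (F z)⁻¹)⁻¹) z :=
      (DifferentiableAt.comp (g := W) z
        ((hW.mono hδΩ).differentiableAt (isOpen_ball.mem_nhds hzb)) d2).inv h5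
    have d5 : DifferentiableAt ℂ V z := DifferentiableAt.comp (g := G') z hG1 d4
    have d6 : DifferentiableAt ℂ (fun z => l' (V z)) z :=
      DifferentiableAt.comp (g := l') z
        (hl'.differentiableAt (isOpen_ball.mem_nhds (by simpa using hV1))) d5
    exact (d1.sub d3).sub d6
  · intro z hz
    have hz1 : ‖z‖ < 1 := by linarith
    obtain ⟨hz0, h1, -, -, h4, h5, -⟩ := hann z hz.ge hz1
    obtain ⟨-, hV1, -, hV2⟩ := hVp z hz.ge hz1
    have hFp : 0 < ‖F z‖ := norm_pos_iff.2 h1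
    have hWp : 0 < ‖W (F z)⁻¹‖ := norm_pos_iff.2 h5
    have hFup : r * ‖F z‖ ≤ E * e := by
      rw [hle z (by simpa using hz1), norm_mul, norm_mul, hnr, hz, Complex.norm_exp]
      have hb := hlb z (by rw [hz]; linarith)
      have h2 := (abs_le.1 ((Complex.abs_re_le_norm _).trans hb)).2
      have h3 : Real.exp (l z).re ≤ E := by
        rw [hE]; apply Real.exp_le_exp.2; rw [hz] at h2; linarith
      have h6 : r * (r⁻¹ * e * Real.exp (l z).re) = e * Real.exp (l z).re := by
        field_simp
      rw [h6]
      nlinarith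
    have hVb : ‖V z‖ ≤ 768 * E ^ 4 * e := by
      have v1 := hlow' (V z) hV1
      rw [hV2, norm_inv] at v1
      have v2 := (hWup (F z)⁻¹ (h4.trans he2)).2
      rw [norm_inv] at v2
      have v3 : ‖W (F z)⁻¹‖⁻¹ ≤ E * ‖F z‖ / ‖a‖ := by
        rw [inv_le_iff_one_le_mul₀ hWp]
        have : 1 ≤ E * ‖W (F z)⁻¹‖ * ‖F z‖ / ‖a‖ := by
          rw [le_div_iff₀ hap]
          rw [← div_eq_mul_inv, div_le_iff₀ hFp] at v2
          linarith
        refine this.trans (le_of_eq ?_)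
        ring
      calc ‖V z‖ ≤ 4 * E * r' * ‖W (F z)⁻¹‖⁻¹ := v1
        _ ≤ 4 * E * (192 * E * ‖a‖ * r) * (E * ‖F z‖ / ‖a‖) := by gcongr
        _ = 768 * E ^ 3 * (r * ‖F z‖) := by field_simp; norm_num
        _ ≤ 768 * E ^ 3 * (E * e) := by gcongr
        _ = 768 * E ^ 4 * e := by ring
    have b1 := hlb z (by rw [hz]; linarith)
    have b2 := hlamb (F z)⁻¹ (h4.trans he2)
    have b3 := hlb' (V z) (by linarith)
    rw [hz] at b1
    have b4 : 386 / δ * ‖(F z)⁻¹‖ ≤ 386 / δ * (4 * E * e) := by gcongr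
    have n1 := norm_sub_le (l z - lam (F z)⁻¹) (l' (V z))
    have n2 := norm_sub_le (l z) (lam (F z)⁻¹)
    have b5 : 386 / δ * (4 * E * e) = 1544 * E / δ * e := by ring
    simp only [hh]
    linarith
  · intro k hk
    obtain ⟨p, hp1, hp⟩ := aux_bdry (K := K) (K' := W '' K) (B := closedBall 0 (δ/2)) (F := F)
      (G := G) (F' := F') (W := W) (V := V) (e := e) (isCompact_closedBall _ _) h0K
      (fun z hz => mem_image_of_mem W hz)
      ((hW.mono ((closedBall_subset_ball (by linarith)).trans hδΩ)).continuousOn)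
      (fun u hu hu' => ⟨(hGu u hu hu').1.continuousAt, (hGu u hu hu').2.1⟩)
      (fun z hz hz1 => by
        obtain ⟨-, h1, -, h3, h4, h5, -⟩ := hann z hz hz1
        exact ⟨h1, h3, by rw [mem_closedBall_zero_iff]; linarith, h5, (hVp z hz hz1).2.2.2⟩)
      hFd'.continuousOn hF0' (fun z hz hz0 => (hFz' z hz hz0).2.1)
      (η := Real.exp (-k)) (by rw [Real.exp_lt_one_iff]; linarith)
    refine ⟨max p (Real.exp (-k)), max_lt hp1 (by rw [Real.exp_lt_one_iff]; linarith), ?_⟩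
    intro z hpz hz hz1
    rw [hD z hz hz1]
    have hz0 : 0 < ‖z‖ := hep.trans_le hz
    obtain ⟨-, hV1, hV0, -⟩ := hVp z hz hz1
    have hVpos : 0 < ‖V z‖ := norm_pos_iff.2 hV0
    have q1 : Real.log ‖V z‖ < 0 := Real.log_neg hVpos hV1
    have q2 : Real.log ‖z‖ < 0 := Real.log_neg hz0 hz1
    have q3 : -k < Real.log ‖V z‖ :=
      (Real.lt_log_iff_exp_lt hVpos).2 (hp z (lt_of_le_of_lt (le_max_left _ _) hpz) hz hz1)
    have q4 : -k < Real.log ‖z‖ :=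
      (Real.lt_log_iff_exp_lt hz0).2 (lt_of_le_of_lt (le_max_right _ _) hpz)
    rw [abs_le]
    constructor <;> linarith

/-- Let `W` be a conformal map on a domain `Ω ∋ 0` with `W(0) = 0`. There exist constants
`C₁ > 0` and `c < 0` such that for every `ℂ`-hull `K` with `{0} ⊊ K ⊆ Ω` and `cap(K) ≤ c`,
`|cap(W(K)) − cap(K) − log |W'(0)|| ≤ C₁ e^{cap(K)/2}`. -/
theorem capacity_under_conformal_map (Ω : Set ℂ) (W : ℂ → ℂ)
    (hΩ : IsOpen Ω) (hΩ0 : (0 : ℂ) ∈ Ω) (hΩconn : IsConnected Ω)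
    (hW : DifferentiableOn ℂ W Ω) (hWinj : InjOn W Ω) (hW0 : W 0 = 0) :
    ∃ C₁ : ℝ, 0 < C₁ ∧ ∃ c : ℝ, c < 0 ∧
      ∀ (K : Set ℂ) (gK gWK : ℂ → ℂ) (capK capWK : ℝ),
        IsCHull K → ({0} : Set ℂ) ⊂ K → K ⊆ Ω →
        IsWholePlaneCapacityMap K gK capK →
        IsCHull (W '' K) → IsWholePlaneCapacityMap (W '' K) gWK capWK →
        capK ≤ c →
        |capWK - capK - Real.log ‖deriv W 0‖| ≤ C₁ * Real.exp (capK / 2) := by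
  obtain ⟨δ, hδ, hδΩ⟩ := Metric.isOpen_iff.1 hΩ 0 hΩ0
  have ha : deriv W 0 ≠ 0 := (aux_inj_deriv_ne_zero hΩ hW hWinj).2 0 hΩ0
  obtain ⟨lam, hlam, hlamW, hlamb⟩ := aux_ell hδ (hW.mono hδΩ) (hWinj.mono hδΩ) hW0
  obtain ⟨E, hE⟩ : ∃ E : ℝ, E = Real.exp 193 := ⟨_, rfl⟩
  have hEp : 0 < E := hE ▸ Real.exp_pos _
  obtain ⟨m, hm⟩ : ∃ m : ℝ,
      m = min (1 / 2) (min (δ / (8 * E)) (min (δ / 384) (1 / (1536 * E ^ 4)))) := ⟨_, rfl⟩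
  have hmp : 0 < m := by rw [hm]; positivity
  have m1 : m ≤ 1 / 2 := by rw [hm]; exact min_le_left _ _
  have m2 : m ≤ δ / (8 * E) := by
    rw [hm]; exact (min_le_right _ _).trans (min_le_left _ _)
  have m3 : m ≤ δ / 384 := by
    rw [hm]; exact (min_le_right _ _).trans ((min_le_right _ _).trans (min_le_left _ _))
  have m4 : m ≤ 1 / (1536 * E ^ 4) := by
    rw [hm]; exact (min_le_right _ _).trans ((min_le_right _ _).trans (min_le_right _ _))
  rw [le_div_iff₀ (by positivity)] at m2 m3 m4
  refine ⟨386 + 1544 * E / δ + 386 * 768 * E ^ 4, by positivity, 2 * Real.log m, ?_, ?_⟩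
  · have := Real.log_neg hmp (by linarith)
    linarith
  intro K gK gWK capK capWK hK h0K hKΩ hgK hK' hgWK hcap
  have hem : Real.exp (capK / 2) ≤ m := by
    rw [← Real.le_log_iff_exp_le hmp]
    linarith
  refine aux_main Ω W hW hWinj hW0 hδ hδΩ ha hlam hlamW hlamb hE hK.1 (h0K.subset rfl) hKΩ hgK
    hK'.1 hgWK rfl (by linarith) ?_ (by linarith) ?_
  · have : E * Real.exp (capK / 2) ≤ E * m := by gcongr
    linarith
  · have : E ^ 4 * Real.exp (capK / 2) ≤ E ^ 4 * m := by gcongr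
    linarith
end
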